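/- arXiv:2412.14016 — 2 statements merged into one kernel-verified Lean document; each statement's English description precedes it below -/
import Mathlib

section
/- Let p ≥ 1, 1/2 < α ≤ 1 with αp ≥ 1, and let {X_{m,n} : m ≥ 1, n ≥ 1} be a double array of random variables satisfying Condition (H_{2q}), where q = 1 if 1 ≤ p < 2 and q > (αp−1)/(2α−1) if p ≥ 2. If {X_{m,n}} is stochastically dominated by a random variable X satisfying E(|X|^p log|X|) < ∞, then for every ε > 0, ∑_{m=1}^∞ ∑_{n=1}^∞ (mn)^{αp−2} P( max_{1≤u≤m, 1≤v≤n} |∑_{i=1}^{u} ∑_{j=1}^{v} (X_{i,j} − E X_{i,j})| > ε (mn)^{α} ) < ∞. -/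
/-!
Condition (H_{2q}) bounds moments of sums, not of maxima of partial sums, so the maximum over
rectangles is handled by chaining with level-dependent truncation, in the manner of Rio.

Since the condition is invariant under `X ↦ -X`, it is enough to treat the positive parts `X⁺`
(`two_sided`). Put `β = 2 ^ α`, and consider rectangles contained in `[1, 2^m] × [1, 2^n]`, with
`K = m + n`. Outside an event of probability at most `2^K P(|Y| > β^K)`, each `X⁺` is the sum of its
layers between consecutive heights `0, 1, β, β², …, β^K` (`height`, `layer`). The layer `L` is a
nondecreasing nonnegative function of `X`. Nonnegativity allows an arbitrary rectangle to be
sandwiched between two grid rectangles, at the deterministic cost of the mean of the layer over the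
added cells (`rect_bound`): the coarser the grid, the larger this cost, and the grid of level
`K - L` keeps it at `2^L E(|Y| - height L)⁺`, which sums over `L` to `o(β^K)` (`error_small`). Grid
rectangles are disjoint unions of at most `(K - L + 1)²` dyadic ones, and Condition (H_{2q}) with
Markov's inequality controls all dyadic rectangles of a given pair of levels (`level_prob`). This
gives the maximal inequality `pos_part_prob`.

With thresholds for the layers decaying geometrically in `K - L`, the resulting probabilities form a
Cauchy product (`cauchy_summable`) of a convergent geometric-type series and the series of
`(L + 1) β^(-(2q - p) L) E min(|Y|, β^L)^(2q)`, which is finite because `E |Y|^p log |Y| < ∞`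
(`summable_trunc_moments`); for `p ≥ 2` the variance term has a geometric ratio less than `1`
precisely by the lower bound on `q`. The factor `L + 1`, that is, the logarithm in the moment
condition, comes from the `K + 1` dyadic blocks `(m, n)` with `m + n = K` (`tsum_dyadic_le`).
-/

open MeasureTheory ProbabilityTheory Finset Filter
open scoped NNReal ENNReal

noncomputable section

/-- `rlog x` is the natural logarithm of `max x 2`. -/
def rlog (x : ℝ) : ℝ := Real.log (max x 2)

/-- `itlog k x` is the `k`-fold iterate of `rlog` applied to `x`. -/
def itlog : ℕ → ℝ → ℝ
  | 0, x => x
  | k + 1, x => rlog (itlog k x)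

/-- `logNu2 ν x = (log x)(log log x) ⋯ (log ⋯ log x)²`, the product of the first `ν`
iterated logarithms of `x`, with the last (`ν`-fold iterated) factor squared. -/
def logNu2 (ν : ℕ) (x : ℝ) : ℝ := (∏ k ∈ Finset.Icc 1 ν, itlog k x) * itlog ν x

/-- The maximum of the (nonnegative) values `g i j` over `1 ≤ i ≤ M`, `1 ≤ j ≤ N`. -/
def maxNN (M N : ℕ) (g : ℕ → ℕ → ℝ) : ℝ :=
  (((Finset.Icc 1 M ×ˢ Finset.Icc 1 N).sup fun p => Real.toNNReal (g p.1 p.2) : ℝ≥0) : ℝ)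

/-- `maxDS f m n = max_{1 ≤ u ≤ m, 1 ≤ v ≤ n} |∑_{i=1}^{u} ∑_{j=1}^{v} f i j|`. -/
def maxDS (f : ℕ → ℕ → ℝ) (m n : ℕ) : ℝ :=
  maxNN m n fun u v => |∑ i ∈ Finset.Icc 1 u, ∑ j ∈ Finset.Icc 1 v, f i j|

/-- Index set of a doubly-indexed array: pairs of indices that are both at least `1`. -/
abbrev PIdx : Type := {k : ℕ × ℕ // 1 ≤ k.1 ∧ 1 ≤ k.2}

/-- Condition (H_{2q}) with a given constant `C`: for every finite subfamily and every
family of nondecreasing functions (whose relevant expectations are finite),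
`E|∑ (f_λ(X_λ) - E f_λ(X_λ))|^{2q}
   ≤ C (|I| max E|f_λ(X_λ)|^{2q} + |I|^q max (E f_λ(X_λ)²)^q)`. -/
def CondHWith {Ω : Type*} [MeasureSpace Ω] {Λ : Type*} (q C : ℝ) (X : Λ → Ω → ℝ) : Prop :=
  ∀ (I : Finset Λ) (hI : I.Nonempty) (f : Λ → ℝ → ℝ),
    (∀ l ∈ I, Monotone (f l)) →
    (∀ l ∈ I, Integrable fun ω => f l (X l ω)) →
    (∀ l ∈ I, Integrable fun ω => (f l (X l ω)) ^ 2) →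
    (∀ l ∈ I, Integrable fun ω => |f l (X l ω)| ^ (2 * q)) →
    (Integrable fun ω => |∑ l ∈ I, (f l (X l ω) - ∫ ω', f l (X l ω'))| ^ (2 * q)) →
    ∫ ω, |∑ l ∈ I, (f l (X l ω) - ∫ ω', f l (X l ω'))| ^ (2 * q) ≤
      C * ((I.card : ℝ) * I.sup' hI (fun l => ∫ ω, |f l (X l ω)| ^ (2 * q)) +
           (I.card : ℝ) ^ q * I.sup' hI fun l => (∫ ω, (f l (X l ω)) ^ 2) ^ q)

/-- Condition (H_{2q}): there is a finite constant for which `CondHWith` holds. -/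
def CondH {Ω : Type*} [MeasureSpace Ω] {Λ : Type*} (q : ℝ) (X : Λ → Ω → ℝ) : Prop :=
  ∃ C : ℝ, CondHWith q C X

/-- The family `X` is stochastically dominated by the random variable `Y`:
`sup_λ P(|X_λ| > x) ≤ P(|Y| > x)` for every real `x`. -/
def StochDom {Ω : Type*} [MeasureSpace Ω] {Λ : Type*} (X : Λ → Ω → ℝ) (Y : Ω → ℝ) : Prop :=
  ∀ x : ℝ, ∀ l : Λ, volume {ω | x < |X l ω|} ≤ volume {ω | x < |Y ω|}

/-- Uniform integrability: `sup_λ E(|Y_λ| 1(|Y_λ| > a)) → 0` as `a → ∞`. -/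
def UnifInt {Ω : Type*} [MeasureSpace Ω] {Λ : Type*} (Y : Λ → Ω → ℝ) : Prop :=
  (∀ l, Integrable (Y l)) ∧
  ∀ ε : ℝ, 0 < ε → ∃ a : ℝ, ∀ l, ∫ ω, (if a < |Y l ω| then |Y l ω| else 0) ≤ ε

/-- A slowly varying function: positive and measurable on `[0,∞)` with
`L(cx)/L(x) → 1` as `x → ∞` for every `c > 0`. -/
def SlowlyVarying (L : ℝ → ℝ) : Prop :=
  Measurable L ∧ (∀ x : ℝ, 0 ≤ x → 0 < L x) ∧
  ∀ c : ℝ, 0 < c → Tendsto (fun x => L (c * x) / L x) atTop (nhds 1)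

/-- `Lt` is a de Bruijn conjugate of `L`. -/
def DeBruijnConjugate (L Lt : ℝ → ℝ) : Prop :=
  SlowlyVarying Lt ∧
  Tendsto (fun x => L x * Lt (x * L x)) atTop (nhds 1) ∧
  Tendsto (fun x => Lt x * L (x * Lt x)) atTop (nhds 1)

/-- Truncation from above at level `b (2^s)`:
`X_{i,j} 1(X_{i,j} ≤ b_{2^s}) + b_{2^s} 1(X_{i,j} > b_{2^s})`. -/
def truncUp {Ω : Type*} (X : ℕ → ℕ → Ω → ℝ) (b : ℕ → ℝ) (s i j : ℕ) (ω : Ω) : ℝ :=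
  if X i j ω ≤ b (2 ^ s) then X i j ω else b (2 ^ s)

/-- Two-sided truncation at level `b (2^s)`:
`-b_{2^s} 1(X < -b_{2^s}) + X 1(|X| ≤ b_{2^s}) + b_{2^s} 1(X > b_{2^s})`. -/
def truncTwo {Ω : Type*} (X : ℕ → ℕ → Ω → ℝ) (b : ℕ → ℝ) (s i j : ℕ) (ω : Ω) : ℝ :=
  if X i j ω < -b (2 ^ s) then -b (2 ^ s)
  else if b (2 ^ s) < X i j ω then b (2 ^ s) else X i j ω

/-! ### Dyadic rectangles and rounding -/

/-- Binary expansion of the length `c`: a prefix with endpoint on the grid of mesh `2^(m-s)` is a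
disjoint union of at most one dyadic interval per level `i ≤ s`. -/
lemma dyadic_line (g : ℕ → ℝ) (m : ℕ) (lam : ℝ) (hl : 0 ≤ lam) (s : ℕ) (hs : s ≤ m)
    (h : ∀ i ≤ s, ∀ k < 2 ^ i,
      |∑ x ∈ Finset.Ioc (k * 2 ^ (m - i)) ((k + 1) * 2 ^ (m - i)), g x| ≤ lam) :
    ∀ c ≤ 2 ^ s, |∑ x ∈ Finset.Ioc 0 (c * 2 ^ (m - s)), g x| ≤ (s + 1) * lam := by
  induction s with
  | zero =>
    intro c hc
    have : c = 0 ∨ c = 1 := by simp at hc; omega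
    rcases this with rfl | rfl
    · simpa using hl
    · simpa using h 0 le_rfl 0 (by simp)
  | succ s ih =>
    intro c hc
    have ih' := ih (by omega) (fun i hi => h i (by omega))
    have h2 : 2 ^ (m - s) = 2 * 2 ^ (m - (s + 1)) := by
      rw [← pow_succ']; congr 1; omega
    rw [pow_succ] at hc
    rcases Nat.even_or_odd' c with ⟨d, rfl | rfl⟩
    · have := ih' d (by omega)
      rw [h2] at this
      rw [show 2 * d * 2 ^ (m - (s + 1)) = d * (2 * 2 ^ (m - (s + 1))) by ring]
      push_cast
      linarith
    · have h1 := ih' d (by omega)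
      rw [h2, show d * (2 * 2 ^ (m - (s + 1))) = 2 * d * 2 ^ (m - (s + 1)) by ring] at h1
      have h3 := h (s + 1) le_rfl (2 * d) (by rw [pow_succ]; omega)
      rw [← Finset.sum_Ioc_consecutive g (Nat.zero_le (2 * d * 2 ^ (m - (s + 1))))
        (Nat.mul_le_mul_right _ (by omega : 2 * d ≤ 2 * d + 1))]
      refine (abs_add_le _ _).trans ?_
      push_cast
      linarith

/-- A rectangle with corners on the grid of mesh `2^(m-s) × 2^(n-s')` is a disjoint union of at
most `(s+1)(s'+1)` dyadic rectangles, one for each pair of levels. -/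
lemma dyadic_rect (d : ℕ → ℕ → ℝ) (m n : ℕ) (lam : ℝ) (hl : 0 ≤ lam) (s s' : ℕ)
    (hs : s ≤ m) (hs' : s' ≤ n)
    (h : ∀ i ≤ s, ∀ i' ≤ s', ∀ k < 2 ^ i, ∀ k' < 2 ^ i',
      |∑ x ∈ Finset.Ioc (k * 2 ^ (m - i)) ((k + 1) * 2 ^ (m - i)),
        ∑ y ∈ Finset.Ioc (k' * 2 ^ (n - i')) ((k' + 1) * 2 ^ (n - i')), d x y| ≤ lam)
    (c c' : ℕ) (hc : c ≤ 2 ^ s) (hc' : c' ≤ 2 ^ s') :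
    |∑ x ∈ Finset.Ioc 0 (c * 2 ^ (m - s)), ∑ y ∈ Finset.Ioc 0 (c' * 2 ^ (n - s')), d x y|
      ≤ (s + 1) * ((s' + 1) * lam) := by
  refine dyadic_line (fun x => ∑ y ∈ Finset.Ioc 0 (c' * 2 ^ (n - s')), d x y) m _
    (by positivity) s hs ?_ c hc
  intro i hi k hk
  rw [Finset.sum_comm]
  refine dyadic_line (fun y => ∑ x ∈ Finset.Ioc (k * 2 ^ (m - i)) ((k + 1) * 2 ^ (m - i)),
    d x y) n lam hl s' hs' ?_ c' hc'
  intro i' hi' k' hk'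
  rw [Finset.sum_comm]
  exact h i hi i' hi' k hk k' hk'

lemma sum_Ioc_prod (d : ℕ → ℕ → ℝ) (u v : ℕ) :
    ∑ x ∈ Finset.Ioc 0 u, ∑ y ∈ Finset.Ioc 0 v, d x y
      = ∑ z ∈ Finset.Ioc 0 u ×ˢ Finset.Ioc 0 v, d z.1 z.2 := by
  rw [Finset.sum_product]

/-- For nonnegative `z` with compensator `e ∈ [0, h]`, enlarging a rectangle decreases the
compensated sum by at most `h` times the number of added cells. -/
lemma rect_mono (z e : ℕ → ℕ → ℝ) (h : ℝ)
    (hz : ∀ x y, 1 ≤ x → 1 ≤ y → 0 ≤ z x y)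
    (he : ∀ x y, 1 ≤ x → 1 ≤ y → e x y ≤ h)
    (u v u' v' : ℕ) (hu : u ≤ u') (hv : v ≤ v') :
    ∑ x ∈ Finset.Ioc 0 u, ∑ y ∈ Finset.Ioc 0 v, (z x y - e x y)
      ≤ (∑ x ∈ Finset.Ioc 0 u', ∑ y ∈ Finset.Ioc 0 v', (z x y - e x y))
        + ((u' : ℝ) * v' - u * v) * h := by
  rw [sum_Ioc_prod (fun x y => z x y - e x y), sum_Ioc_prod (fun x y => z x y - e x y)]
  have hsub : Finset.Ioc 0 u ×ˢ Finset.Ioc 0 v ⊆ Finset.Ioc 0 u' ×ˢ Finset.Ioc 0 v' :=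
    Finset.product_subset_product (Finset.Ioc_subset_Ioc_right hu)
      (Finset.Ioc_subset_Ioc_right hv)
  rw [← Finset.sum_sdiff hsub]
  have hcard : (((Finset.Ioc 0 u' ×ˢ Finset.Ioc 0 v') \ (Finset.Ioc 0 u ×ˢ Finset.Ioc 0 v)).card
      : ℝ) = (u' : ℝ) * v' - u * v := by
    rw [Finset.cast_card_sdiff hsub]
    simp
  have : -(((u' : ℝ) * v' - u * v) * h) ≤
      ∑ q ∈ (Finset.Ioc 0 u' ×ˢ Finset.Ioc 0 v') \ (Finset.Ioc 0 u ×ˢ Finset.Ioc 0 v),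
        (z q.1 q.2 - e q.1 q.2) := by
    rw [← hcard, ← mul_neg, ← nsmul_eq_mul]
    refine Finset.card_nsmul_le_sum _ _ _ ?_
    intro q hq
    simp only [Finset.mem_sdiff, Finset.mem_product, Finset.mem_Ioc] at hq
    have h1 := hz q.1 q.2 (by omega) (by omega)
    have h2 := he q.1 q.2 (by omega) (by omega)
    linarith
  linarith

/-- Rounding `u ≤ 2^m` down and up to the grid of mesh `2^(m - min j m)`; for `j ≥ m` the mesh is
`1` and nothing is rounded. -/
lemma round_aux (m j u : ℕ) (hu : u ≤ 2 ^ m) :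
    ∃ c ≤ 2 ^ (min j m), ∃ c' ≤ 2 ^ (min j m),
      c * 2 ^ (m - min j m) ≤ u ∧ u ≤ c' * 2 ^ (m - min j m) ∧
      (c' : ℝ) * 2 ^ (m - min j m) ≤ u + (2 ^ (m - min j m) - 1) ∧
      (u : ℝ) ≤ (c : ℝ) * 2 ^ (m - min j m) + (2 ^ (m - min j m) - 1) := by
  set M := 2 ^ (m - min j m) with hM
  have hMpos : 0 < M := by positivity
  have htot : 2 ^ (min j m) * M = 2 ^ m := by
    rw [hM, ← pow_add]; congr 1; omega
  have hdm := Nat.div_add_mod u M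
  have hml := Nat.mod_lt u hMpos
  have hd2 := Nat.div_add_mod (u + (M - 1)) M
  have hml2 := Nat.mod_lt (u + (M - 1)) hMpos
  refine ⟨u / M, ?_, (u + (M - 1)) / M, ?_, ?_, ?_, ?_, ?_⟩
  · exact Nat.div_le_of_le_mul (by rw [mul_comm, htot]; exact hu)
  · rw [← Nat.lt_succ_iff, Nat.div_lt_iff_lt_mul hMpos, Nat.succ_mul, htot]
    omega
  · exact Nat.div_mul_le_self _ _
  · rw [mul_comm]; omega
  · have : M * ((u + (M - 1)) / M) + 1 ≤ u + M := by omega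
    have h' : ((M * ((u + (M - 1)) / M) + 1 : ℕ) : ℝ) ≤ ((u + M : ℕ) : ℝ) := by exact_mod_cast this
    push_cast [hM] at h' ⊢
    linarith
  · have : u + 1 ≤ M * (u / M) + M := by omega
    have h' : ((u + 1 : ℕ) : ℝ) ≤ ((M * (u / M) + M : ℕ) : ℝ) := by exact_mod_cast this
    push_cast [hM] at h' ⊢
    linarith

/-- The number of cells in a strip of width less than one mesh. The `- 1` makes it vanish at mesh
`1`, which keeps the bound valid for `j > m`. -/
lemma mesh_err (m n j : ℕ) (hj : j ≤ m + n) :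
    ((2 : ℝ) ^ (m - min j m) - 1) * 2 ^ n ≤ 2 ^ (m + n - j) := by
  rcases le_total j m with h | h
  · rw [min_eq_left h, show m + n - j = (m - j) + n by omega, pow_add]
    have : (0 : ℝ) < 2 ^ n := by positivity
    nlinarith
  · rw [min_eq_right h]
    simp

/-- Sandwiching a rectangle between two grid rectangles: control of the compensated sums over all
dyadic rectangles of level at most `j` controls them over all rectangles. -/
lemma rect_bound (z e : ℕ → ℕ → ℝ) (h lam : ℝ) (m n j : ℕ) (hj : j ≤ m + n)
    (hz : ∀ x y, 1 ≤ x → 1 ≤ y → 0 ≤ z x y) (hh : 0 ≤ h)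
    (he : ∀ x y, 1 ≤ x → 1 ≤ y → e x y ≤ h) (hl : 0 ≤ lam)
    (hb : ∀ i ≤ min j m, ∀ i' ≤ min j n, ∀ k < 2 ^ i, ∀ k' < 2 ^ i',
      |∑ x ∈ Finset.Ioc (k * 2 ^ (m - i)) ((k + 1) * 2 ^ (m - i)),
        ∑ y ∈ Finset.Ioc (k' * 2 ^ (n - i')) ((k' + 1) * 2 ^ (n - i')), (z x y - e x y)| ≤ lam)
    (u v : ℕ) (hu : u ≤ 2 ^ m) (hv : v ≤ 2 ^ n) :
    |∑ x ∈ Finset.Ioc 0 u, ∑ y ∈ Finset.Ioc 0 v, (z x y - e x y)|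
      ≤ ((j : ℝ) + 1) ^ 2 * lam + 2 * 2 ^ (m + n - j) * h := by
  obtain ⟨c, hc, c', hc', h1, h2, h3, h4⟩ := round_aux m j u hu
  obtain ⟨d, hd, d', hd', g1, g2, g3, g4⟩ := round_aux n j v hv
  have key := dyadic_rect (fun x y => z x y - e x y) m n lam hl (min j m) (min j n)
    (min_le_right _ _) (min_le_right _ _) hb
  have hcoef : ((min j m : ℕ) + 1 : ℝ) * (((min j n : ℕ) + 1 : ℝ) * lam)
      ≤ ((j : ℝ) + 1) ^ 2 * lam := by
    have a1 : ((min j m : ℕ) : ℝ) ≤ j := by exact_mod_cast min_le_left _ _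
    have a2 : ((min j n : ℕ) : ℝ) ≤ j := by exact_mod_cast min_le_left _ _
    rw [← mul_assoc, pow_two]
    gcongr
  have k1 := (abs_le.1 ((key c d hc hd).trans hcoef)).1
  have k2 := (abs_le.1 ((key c' d' hc' hd').trans hcoef)).2
  have r1 := rect_mono z e h hz he _ _ _ _ h1 g1
  have r2 := rect_mono z e h hz he _ _ _ _ h2 g2
  have e1 := mesh_err m n j hj
  have e2 := mesh_err n m j (by omega)
  rw [add_comm n m] at e2
  have hu' : (u : ℝ) ≤ 2 ^ m := by exact_mod_cast hu
  have hv' : (v : ℝ) ≤ 2 ^ n := by exact_mod_cast hv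
  have p1 : (1 : ℝ) ≤ 2 ^ (m - min j m) := one_le_pow₀ (by norm_num)
  have p2 : (1 : ℝ) ≤ 2 ^ (n - min j n) := one_le_pow₀ (by norm_num)
  have hu0 : (0 : ℝ) ≤ u := by positivity
  have hv0 : (0 : ℝ) ≤ v := by positivity
  have b1 : (u : ℝ) * v - (c * 2 ^ (m - min j m) : ℕ) * (d * 2 ^ (n - min j n) : ℕ)
      ≤ 2 * 2 ^ (m + n - j) := by
    push_cast
    have hd0 : (d : ℝ) * 2 ^ (n - min j n) ≤ v := by exact_mod_cast g1
    have hc0 : (c : ℝ) * 2 ^ (m - min j m) ≤ u := by exact_mod_cast h1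
    have hcn : (0 : ℝ) ≤ (c : ℝ) * 2 ^ (m - min j m) := by positivity
    have t1 : (u - (c : ℝ) * 2 ^ (m - min j m)) * v ≤ (2 ^ (m - min j m) - 1) * 2 ^ n :=
      mul_le_mul (by linarith) hv' hv0 (by linarith)
    have t2 : (v - (d : ℝ) * 2 ^ (n - min j n)) * (c * 2 ^ (m - min j m))
        ≤ (2 ^ (n - min j n) - 1) * 2 ^ m :=
      mul_le_mul (by linarith) (by linarith) hcn (by linarith)
    nlinarith
  have b2 : ((c' * 2 ^ (m - min j m) : ℕ) : ℝ) * (d' * 2 ^ (n - min j n) : ℕ) - u * v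
      ≤ 2 * 2 ^ (m + n - j) := by
    have hd0 : ((d' * 2 ^ (n - min j n) : ℕ) : ℝ) ≤ 2 ^ n := by
      have : d' * 2 ^ (n - min j n) ≤ 2 ^ n := by
        calc d' * 2 ^ (n - min j n) ≤ 2 ^ (min j n) * 2 ^ (n - min j n) :=
              Nat.mul_le_mul_right _ hd'
          _ = 2 ^ n := by rw [← pow_add]; congr 1; omega
      exact_mod_cast this
    have hdn : (0 : ℝ) ≤ ((d' * 2 ^ (n - min j n) : ℕ) : ℝ) := by positivity
    push_cast at hd0 hdn ⊢
    have t1 : ((c' : ℝ) * 2 ^ (m - min j m) - u) * (d' * 2 ^ (n - min j n))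
        ≤ (2 ^ (m - min j m) - 1) * 2 ^ n :=
      mul_le_mul (by linarith) hd0 hdn (by linarith)
    have t2 : ((d' : ℝ) * 2 ^ (n - min j n) - v) * u ≤ (2 ^ (n - min j n) - 1) * 2 ^ m :=
      mul_le_mul (by linarith) hu' hu0 (by linarith)
    nlinarith
  have b1' := mul_le_mul_of_nonneg_right b1 hh
  have b2' := mul_le_mul_of_nonneg_right b2 hh
  rw [abs_le]
  constructor <;> linarith

/-! ### Layers and stochastic domination -/

/-- The layer of the positive part of `x` between the heights `b L` and `b (L + 1)`. -/
def layer (b : ℕ → ℝ) (L : ℕ) (x : ℝ) : ℝ := min (max x 0) (b (L + 1)) - min (max x 0) (b L)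

lemma layer_monotone (b : ℕ → ℝ) (hb : Monotone b) (L : ℕ) : Monotone (layer b L) := by
  intro x y hxy
  have h1 : max x 0 ≤ max y 0 := max_le_max_right 0 hxy
  have h2 := hb (Nat.le_succ L)
  simp only [layer, Nat.succ_eq_add_one] at *
  generalize max x 0 = s at *
  generalize max y 0 = t at *
  simp only [min_def]
  split_ifs <;> linarith

lemma layer_nonneg (b : ℕ → ℝ) (hb : Monotone b) (L : ℕ) (x : ℝ) : 0 ≤ layer b L x :=
  sub_nonneg.2 (min_le_min_left _ (hb (Nat.le_succ L)))

lemma max_zero_le_abs (x : ℝ) : max x 0 ≤ |x| := max_le (le_abs_self x) (abs_nonneg x)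

lemma layer_le_min (b : ℕ → ℝ) (hb0 : ∀ L, 0 ≤ b L) (L : ℕ) (x : ℝ) :
    layer b L x ≤ min |x| (b (L + 1)) := by
  have h1 := max_zero_le_abs x
  have h2 : 0 ≤ min (max x 0) (b L) := le_min (le_max_right _ _) (hb0 L)
  have h3 : min (max x 0) (b (L + 1)) ≤ min |x| (b (L + 1)) := min_le_min_right _ h1
  simp only [layer]; linarith

lemma layer_le_excess (b : ℕ → ℝ) (L : ℕ) (x : ℝ) :
    layer b L x ≤ max (|x| - b L) 0 := by
  have h1 := max_zero_le_abs x
  have h2 : min (max x 0) (b (L + 1)) ≤ max x 0 := min_le_left _ _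
  simp only [layer]
  rcases min_cases (max x 0) (b L) with h | h
  · exact le_max_of_le_right (by linarith)
  · exact le_max_of_le_left (by linarith)

lemma sum_layer (b : ℕ → ℝ) (hb0 : b 0 = 0) (K : ℕ) (x : ℝ) :
    ∑ L ∈ Finset.range (K + 1), layer b L x = min (max x 0) (b (K + 1)) := by
  have := Finset.sum_range_sub (fun L => min (max x 0) (b L)) (K + 1)
  simp only [layer]
  rw [this, hb0, min_eq_right (le_max_right x 0), sub_zero]

lemma layer_measurable (b : ℕ → ℝ) (L : ℕ) : Measurable (layer b L) := by
  unfold layer; fun_prop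

section Domination

/-- Stochastic domination passes to the expected excess over a level, by the layer-cake formula. -/
lemma dom_excess_lintegral {Ω : Type*} [MeasureSpace Ω] (Z Y : Ω → ℝ) (hZ : Measurable Z)
    (hY : Measurable Y)
    (hdom : ∀ x : ℝ, volume {ω | x < |Z ω|} ≤ volume {ω | x < |Y ω|}) (c : ℝ) :
    ∫⁻ ω, ENNReal.ofReal (max (|Z ω| - c) 0) ≤ ∫⁻ ω, ENNReal.ofReal (max (|Y ω| - c) 0) := by
  have n : ∀ W : Ω → ℝ, ∀ ω, 0 ≤ max (|W ω| - c) 0 := fun W ω => le_max_right _ _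
  rw [lintegral_eq_lintegral_meas_lt volume (ae_of_all _ (n Z)) (by fun_prop),
    lintegral_eq_lintegral_meas_lt volume (ae_of_all _ (n Y)) (by fun_prop)]
  refine setLIntegral_mono' measurableSet_Ioi fun t ht => ?_
  have h : ∀ W : Ω → ℝ, {ω | t < max (|W ω| - c) 0} = {ω | t + c < |W ω|} := by
    intro W; ext ω
    have ht' : ¬ t < 0 := not_lt.2 (le_of_lt ht)
    simp only [Set.mem_ofPred_eq, lt_max_iff, ht', or_false, lt_sub_iff_add_lt]
  rw [h, h]
  exact hdom _

variable {Ω : Type*} [MeasureSpace Ω] [IsProbabilityMeasure (volume : Measure Ω)]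

lemma integrable_min_rpow (Z : Ω → ℝ) (hZ : Measurable Z) (c r : ℝ) (hc : 0 ≤ c) (hr : 0 ≤ r) :
    Integrable fun ω => (min |Z ω| c) ^ r := by
  refine Integrable.of_bound ((hZ.abs.min measurable_const).pow_const r).aestronglyMeasurable (c ^ r)
    (ae_of_all _ fun ω => ?_)
  have : 0 ≤ min |Z ω| c := le_min (abs_nonneg _) hc
  rw [Real.norm_of_nonneg (by positivity)]
  gcongr
  exact min_le_right _ _

lemma dom_min_rpow (Z Y : Ω → ℝ) (hZ : Measurable Z) (hY : Measurable Y)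
    (hdom : ∀ x : ℝ, volume {ω | x < |Z ω|} ≤ volume {ω | x < |Y ω|})
    (c r : ℝ) (hc : 0 ≤ c) (hr : 0 < r) :
    ∫ ω, (min |Z ω| c) ^ r ≤ ∫ ω, (min |Y ω| c) ^ r := by
  have n1 : ∀ W : Ω → ℝ, ∀ ω, 0 ≤ min |W ω| c := fun W ω => le_min (abs_nonneg _) hc
  have n2 : ∀ W : Ω → ℝ, ∀ ω, 0 ≤ (min |W ω| c) ^ r := fun W ω => Real.rpow_nonneg (n1 W ω) r
  rw [integral_eq_lintegral_of_nonneg_ae (ae_of_all _ (n2 Z))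
      (integrable_min_rpow Z hZ c r hc hr.le).aestronglyMeasurable,
    integral_eq_lintegral_of_nonneg_ae (ae_of_all _ (n2 Y))
      (integrable_min_rpow Y hY c r hc hr.le).aestronglyMeasurable]
  refine ENNReal.toReal_mono ?_ ?_
  · exact (integrable_min_rpow Y hY c r hc hr.le).lintegral_lt_top.ne
  · rw [lintegral_rpow_eq_lintegral_meas_lt_mul volume (ae_of_all _ (n1 Z)) (by fun_prop) hr,
      lintegral_rpow_eq_lintegral_meas_lt_mul volume (ae_of_all _ (n1 Y)) (by fun_prop) hr]
    refine mul_le_mul_right (lintegral_mono fun t => mul_le_mul_left ?_ _) _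
    by_cases htc : t < c
    · simpa [lt_min_iff, htc] using hdom t
    · simp [htc]

lemma dom_integrable (Z Y : Ω → ℝ) (hZ : Measurable Z) (hY : Measurable Y)
    (hdom : ∀ x : ℝ, volume {ω | x < |Z ω|} ≤ volume {ω | x < |Y ω|})
    (hYi : Integrable Y) : Integrable Z := by
  have h := dom_excess_lintegral Z Y hZ hY hdom 0
  simp only [sub_zero, abs_nonneg, max_eq_left] at h
  refine (integrable_norm_iff hZ.aestronglyMeasurable).1 ⟨hZ.norm.aestronglyMeasurable, ?_⟩
  rw [hasFiniteIntegral_iff_ofReal (ae_of_all _ fun _ => norm_nonneg _)]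
  exact h.trans_lt hYi.abs.lintegral_lt_top

lemma integrable_excess (Z : Ω → ℝ) (hZ : Integrable Z) (c : ℝ) :
    Integrable fun ω => max (|Z ω| - c) 0 :=
  (hZ.abs.sub (integrable_const c)).sup (integrable_const 0)

lemma dom_excess (Z Y : Ω → ℝ) (hZ : Measurable Z) (hY : Measurable Y)
    (hdom : ∀ x : ℝ, volume {ω | x < |Z ω|} ≤ volume {ω | x < |Y ω|})
    (hYi : Integrable Y) (c : ℝ) :
    ∫ ω, max (|Z ω| - c) 0 ≤ ∫ ω, max (|Y ω| - c) 0 := by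
  have n : ∀ W : Ω → ℝ, ∀ ω, 0 ≤ max (|W ω| - c) 0 := fun W ω => le_max_right _ _
  rw [integral_eq_lintegral_of_nonneg_ae (ae_of_all _ (n Z)) (by fun_prop),
    integral_eq_lintegral_of_nonneg_ae (ae_of_all _ (n Y)) (by fun_prop)]
  exact ENNReal.toReal_mono (integrable_excess Y hYi c).lintegral_lt_top.ne
    (dom_excess_lintegral Z Y hZ hY hdom c)

lemma integrable_layer (Z : Ω → ℝ) (hZ : Measurable Z) (b : ℕ → ℝ) (hb : Monotone b)
    (hb0 : ∀ L, 0 ≤ b L) (L : ℕ) : Integrable fun ω => layer b L (Z ω) := by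
  refine Integrable.of_bound ((layer_measurable b L).comp hZ).aestronglyMeasurable (b (L + 1))
    (ae_of_all _ fun ω => ?_)
  rw [Real.norm_of_nonneg (layer_nonneg b hb L _)]
  exact (layer_le_min b hb0 L _).trans (min_le_right _ _)

/-- Markov's inequality and Condition (H) applied to the layers of a finite subfamily. -/
lemma block_prob {Λ : Type*} (q C : ℝ) (hq : 1 ≤ q) (hC : 0 ≤ C) (X : Λ → Ω → ℝ)
    (hX : ∀ l, Measurable (X l)) (hH : CondHWith q C X)
    (Y : Ω → ℝ) (hY : Measurable Y) (hdom : StochDom X Y)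
    (b : ℕ → ℝ) (hb : Monotone b) (hb0 : ∀ L, 0 ≤ b L) (L : ℕ)
    (I : Finset Λ) (hI : I.Nonempty) (lam : ℝ) (hl : 0 < lam) :
    volume {ω | lam < |∑ l ∈ I, (layer b L (X l ω) - ∫ ω', layer b L (X l ω'))|} ≤
      ENNReal.ofReal (C * (I.card * (∫ ω, (min |Y ω| (b (L + 1))) ^ (2 * q)) +
        (I.card : ℝ) ^ q * (∫ ω, (min |Y ω| (b (L + 1))) ^ (2 : ℝ)) ^ q) / lam ^ (2 * q)) := by
  have hsm := layer_measurable b L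
  have hle : ∀ x, layer b L x ≤ b (L + 1) := fun x =>
    (layer_le_min b hb0 L x).trans (min_le_right _ _)
  have hnn := layer_nonneg b hb L
  have hB := hb0 (L + 1)
  have hint : ∀ l, Integrable fun ω => layer b L (X l ω) := fun l =>
    integrable_layer (X l) (hX l) b hb hb0 L
  have hpow : ∀ r : ℝ, 0 ≤ r → ∀ l, Integrable fun ω => (layer b L (X l ω)) ^ r := by
    intro r hr l
    refine Integrable.of_bound ((hsm.comp (hX l)).pow_const r).aestronglyMeasurable
      ((b (L + 1)) ^ r) (ae_of_all _ fun ω => ?_)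
    rw [Real.norm_of_nonneg (Real.rpow_nonneg (hnn _) _)]
    exact Real.rpow_le_rpow (hnn _) (hle _) hr
  have hcomp : ∀ r : ℝ, 0 < r → ∀ l, ∫ ω, (layer b L (X l ω)) ^ r ≤
      ∫ ω, (min |Y ω| (b (L + 1))) ^ r := by
    intro r hr l
    refine le_trans (integral_mono (hpow r hr.le l) (integrable_min_rpow (X l) (hX l) _ r hB hr.le)
      fun ω => ?_) (dom_min_rpow (X l) Y (hX l) hY (fun x => hdom x l) _ r hB hr)
    exact Real.rpow_le_rpow (hnn _) (layer_le_min b hb0 L _) hr.le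
  set D : Ω → ℝ := fun ω => ∑ l ∈ I, (layer b L (X l ω) - ∫ ω', layer b L (X l ω')) with hD
  have hDm : Measurable D := Finset.measurable_sum _ fun l _ => (hsm.comp (hX l)).sub_const _
  have hmean : ∀ l, 0 ≤ ∫ ω', layer b L (X l ω') ∧ ∫ ω', layer b L (X l ω') ≤ b (L + 1) := by
    intro l
    refine ⟨integral_nonneg fun ω => hnn _, ?_⟩
    refine (integral_mono (hint l) (integrable_const (b (L + 1))) fun ω => hle _).trans ?_
    simp
  have hDb : ∀ ω, |D ω| ≤ I.card * b (L + 1) := by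
    intro ω
    refine (Finset.abs_sum_le_sum_abs _ _).trans ?_
    rw [← nsmul_eq_mul]
    refine Finset.sum_le_card_nsmul _ _ _ fun l _ => ?_
    rw [abs_le]
    have := hnn (X l ω); have := hle (X l ω); have := hmean l
    constructor <;> linarith
  have hq0 : 0 < 2 * q := by linarith
  have hDi : Integrable fun ω => |D ω| ^ (2 * q) := by
    refine Integrable.of_bound (hDm.abs.pow_const _).aestronglyMeasurable ((I.card * b (L + 1)) ^ (2 * q))
      (ae_of_all _ fun ω => ?_)
    rw [Real.norm_of_nonneg (by positivity)]
    exact Real.rpow_le_rpow (abs_nonneg _) (hDb ω) hq0.le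
  have habs : ∀ l ω, |layer b L (X l ω)| = layer b L (X l ω) := fun l ω => abs_of_nonneg (hnn _)
  have hmain := hH I hI (fun _ => layer b L) (fun _ _ => layer_monotone b hb L)
    (fun l _ => hint l) (fun l _ => by simpa using hpow 2 (by norm_num) l)
    (fun l _ => by simpa only [habs] using hpow (2 * q) hq0.le l) hDi
  have hM : ∫ ω, |D ω| ^ (2 * q) ≤
      C * (I.card * (∫ ω, (min |Y ω| (b (L + 1))) ^ (2 * q)) +
        (I.card : ℝ) ^ q * (∫ ω, (min |Y ω| (b (L + 1))) ^ (2 : ℝ)) ^ q) := by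
    refine hmain.trans ?_
    gcongr
    · refine Finset.sup'_le _ _ fun l _ => ?_
      simpa only [habs] using hcomp (2 * q) hq0 l
    · refine Finset.sup'_le _ _ fun l _ => ?_
      refine Real.rpow_le_rpow (integral_nonneg fun ω => sq_nonneg _) ?_ (by linarith)
      simpa using hcomp 2 (by norm_num) l
  have hlam : 0 < lam ^ (2 * q) := by positivity
  have hmk := mul_meas_ge_le_integral_of_nonneg (μ := (volume : Measure Ω))
    (ae_of_all _ fun ω => (by positivity : 0 ≤ |D ω| ^ (2 * q))) hDi (lam ^ (2 * q))
  have hsub : {ω | lam < |D ω|} ⊆ {ω | lam ^ (2 * q) ≤ |D ω| ^ (2 * q)} := fun ω hω =>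
    Real.rpow_le_rpow hl.le (le_of_lt hω) hq0.le
  refine (measure_mono hsub).trans ?_
  rw [← ofReal_measureReal]
  refine ENNReal.ofReal_le_ofReal ?_
  rw [le_div_iff₀ hlam, mul_comm]
  exact hmk.trans hM

end Domination

/-! ### A maximal inequality for positive parts -/

section MaximalBound

variable {Ω : Type*} [MeasureSpace Ω]

lemma union_bound {ι : Type*} (s : Finset ι) (S : ι → Set Ω) (c : ℝ≥0∞)
    (h : ∀ i ∈ s, volume (S i) ≤ c) : volume (⋃ i ∈ s, S i) ≤ s.card * c := by
  refine (measure_biUnion_finset_le s S).trans ((Finset.sum_le_card_nsmul s _ c h).trans ?_)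
  rw [nsmul_eq_mul]

variable [IsProbabilityMeasure (volume : Measure Ω)]

/-- The bound of `block_prob` summed over all dyadic rectangles of a given pair of levels. The
exponent `q ≥ 1` is what makes the second term no larger than for a single rectangle of full
size. -/
lemma level_prob (q C : ℝ) (hq : 1 ≤ q) (hC : 0 ≤ C) (X : ℕ → ℕ → Ω → ℝ)
    (hmeas : ∀ m n : ℕ, 1 ≤ m → 1 ≤ n → Measurable (X m n))
    (hH : CondHWith q C fun k : PIdx => X k.1.1 k.1.2)
    (Y : Ω → ℝ) (hY : Measurable Y) (hdom : StochDom (fun k : PIdx => X k.1.1 k.1.2) Y)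
    (b : ℕ → ℝ) (hb : Monotone b) (hb0 : ∀ L, 0 ≤ b L) (L : ℕ) (lam : ℝ) (hl : 0 < lam)
    (m n i i' : ℕ) (hi : i ≤ m) (hi' : i' ≤ n) :
    volume (⋃ k ∈ Finset.range (2 ^ i) ×ˢ Finset.range (2 ^ i'),
      {ω | lam < |∑ x ∈ Finset.Ioc (k.1 * 2 ^ (m - i)) ((k.1 + 1) * 2 ^ (m - i)),
        ∑ y ∈ Finset.Ioc (k.2 * 2 ^ (n - i')) ((k.2 + 1) * 2 ^ (n - i')),
          (layer b L (X x y ω) - ∫ ω', layer b L (X x y ω'))|}) ≤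
      ENNReal.ofReal (C * (2 ^ (m + n) * (∫ ω, (min |Y ω| (b (L + 1))) ^ (2 * q)) +
        ((2 : ℝ) ^ (m + n)) ^ q * (∫ ω, (min |Y ω| (b (L + 1))) ^ (2 : ℝ)) ^ q)
          / lam ^ (2 * q)) := by
  set A := ∫ ω, (min |Y ω| (b (L + 1))) ^ (2 * q) with hA
  set B := (∫ ω, (min |Y ω| (b (L + 1))) ^ (2 : ℝ)) ^ q with hB
  have hm0 : ∀ ω, 0 ≤ min |Y ω| (b (L + 1)) := fun ω => le_min (abs_nonneg _) (hb0 _)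
  have hA0 : 0 ≤ A := integral_nonneg fun ω => Real.rpow_nonneg (hm0 ω) _
  have hB0 : 0 ≤ B := Real.rpow_nonneg (integral_nonneg fun ω => Real.rpow_nonneg (hm0 ω) _) _
  set s : ℝ := 2 ^ (m - i) * 2 ^ (n - i') with hs
  set T : ℝ := 2 ^ i * 2 ^ i' with hT
  have hsT : T * s = 2 ^ (m + n) := by
    rw [hs, hT]
    calc (2 : ℝ) ^ i * 2 ^ i' * (2 ^ (m - i) * 2 ^ (n - i'))
        = 2 ^ (i + (m - i)) * 2 ^ (i' + (n - i')) := by rw [pow_add, pow_add]; ring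
      _ = _ := by rw [Nat.add_sub_cancel' hi, Nat.add_sub_cancel' hi', pow_add]
  have hT1 : 1 ≤ T := one_le_mul_of_one_le_of_one_le (one_le_pow₀ (by norm_num))
    (one_le_pow₀ (by norm_num))
  have hs0 : 0 < s := by positivity
  have hone : ∀ k ∈ Finset.range (2 ^ i) ×ˢ Finset.range (2 ^ i'),
      volume {ω | lam < |∑ x ∈ Finset.Ioc (k.1 * 2 ^ (m - i)) ((k.1 + 1) * 2 ^ (m - i)),
        ∑ y ∈ Finset.Ioc (k.2 * 2 ^ (n - i')) ((k.2 + 1) * 2 ^ (n - i')),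
          (layer b L (X x y ω) - ∫ ω', layer b L (X x y ω'))|} ≤
      ENNReal.ofReal (C * (s * A + s ^ q * B) / lam ^ (2 * q)) := by
    intro k _
    set F := Finset.Ioc (k.1 * 2 ^ (m - i)) ((k.1 + 1) * 2 ^ (m - i)) ×ˢ
      Finset.Ioc (k.2 * 2 ^ (n - i')) ((k.2 + 1) * 2 ^ (n - i')) with hF
    have hpos : ∀ z ∈ F, 1 ≤ z.1 ∧ 1 ≤ z.2 := by
      intro z hz
      simp only [hF, Finset.mem_product, Finset.mem_Ioc] at hz
      omega
    set I : Finset PIdx := F.subtype (fun k => 1 ≤ k.1 ∧ 1 ≤ k.2) with hI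
    have hcard : I.card = 2 ^ (m - i) * 2 ^ (n - i') := by
      rw [hI, Finset.card_subtype, Finset.filter_true_of_mem hpos, hF, Finset.card_product]
      simp only [Nat.card_Ioc, add_mul, one_mul, Nat.add_sub_cancel_left]
    have hcard' : (I.card : ℝ) = s := by rw [hcard]; push_cast; rfl
    have hne : I.Nonempty := Finset.card_pos.1 (by rw [hcard]; positivity)
    have h := block_prob q C hq hC (fun k : PIdx => X k.1.1 k.1.2)
      (fun l => hmeas _ _ l.2.1 l.2.2) hH Y hY hdom b hb hb0 L I hne lam hl
    rw [hcard'] at h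
    convert h using 6 with ω
    rw [← Finset.sum_product', ← hF, hI]
    exact (Finset.sum_subtype_of_mem
      (fun z : ℕ × ℕ => layer b L (X z.1 z.2 ω) - ∫ ω', layer b L (X z.1 z.2 ω')) hpos).symm
  refine (union_bound _ _ _ hone).trans ?_
  have hcT : (((Finset.range (2 ^ i) ×ˢ Finset.range (2 ^ i')).card : ℕ) : ℝ≥0∞)
      = ENNReal.ofReal T := by
    rw [Finset.card_product, Finset.card_range, Finset.card_range, hT]
    rw [← ENNReal.ofReal_natCast]; push_cast; rfl
  rw [hcT, ← ENNReal.ofReal_mul (by positivity)]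
  refine ENNReal.ofReal_le_ofReal ?_
  rw [← mul_div_assoc]
  have hlam : 0 < lam ^ (2 * q) := by positivity
  refine div_le_div_of_nonneg_right ?_ hlam.le
  have hTq : T * s ^ q ≤ (2 ^ (m + n)) ^ q := by
    rw [← hsT, Real.mul_rpow (by positivity) hs0.le]
    gcongr
    exact Real.self_le_rpow_of_one_le hT1 hq
  calc T * (C * (s * A + s ^ q * B)) = C * ((T * s) * A + (T * s ^ q) * B) := by ring
    _ ≤ _ := by rw [hsT]; gcongr

/-- Maximal inequality for the positive parts. The field is truncated at height `b (K + 1)`, and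
where `K = m + n`, and its layers `L ≤ K` are treated separately. For the layer `L`, dyadic
rectangles of level at most `K - L` in each direction suffice: rounding a rectangle to that grid
changes it by at most `2 * 2^L` cells, which costs `2 * 2^L E(|Y| - b L)⁺` by monotonicity. -/
lemma pos_part_prob (q C : ℝ) (hq : 1 ≤ q) (hC : 0 ≤ C) (X : ℕ → ℕ → Ω → ℝ)
    (hmeas : ∀ m n : ℕ, 1 ≤ m → 1 ≤ n → Measurable (X m n))
    (hH : CondHWith q C fun k : PIdx => X k.1.1 k.1.2)
    (Y : Ω → ℝ) (hY : Measurable Y) (hdom : StochDom (fun k : PIdx => X k.1.1 k.1.2) Y)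
    (hYi : Integrable Y)
    (b : ℕ → ℝ) (hb : Monotone b) (hbz : b 0 = 0) (lam : ℕ → ℝ) (hl : ∀ L, 0 < lam L)
    (m n : ℕ) (t : ℝ)
    (ht : ∑ L ∈ Finset.range (m + n + 1), ((((m + n - L : ℕ) : ℝ) + 1) ^ 2 * lam L
        + 2 * 2 ^ L * ∫ ω, max (|Y ω| - b L) 0)
        + 2 ^ (m + n) * ∫ ω, max (|Y ω| - b (m + n + 1)) 0 ≤ t) :
    volume {ω | ∃ u ≤ 2 ^ m, ∃ v ≤ 2 ^ n, t < |∑ x ∈ Finset.Ioc 0 u, ∑ y ∈ Finset.Ioc 0 v,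
        (max (X x y ω) 0 - ∫ ω', max (X x y ω') 0)|} ≤
      2 ^ (m + n) * volume {ω | b (m + n + 1) < |Y ω|} +
      ∑ L ∈ Finset.range (m + n + 1), ENNReal.ofReal ((((m + n - L : ℕ) : ℝ) + 1) ^ 2 *
        (C * (2 ^ (m + n) * (∫ ω, (min |Y ω| (b (L + 1))) ^ (2 * q)) +
        ((2 : ℝ) ^ (m + n)) ^ q * (∫ ω, (min |Y ω| (b (L + 1))) ^ (2 : ℝ)) ^ q)
          / lam L ^ (2 * q))) := by
  set K := m + n with hK
  have hb0 : ∀ L, 0 ≤ b L := fun L => hbz ▸ hb (Nat.zero_le L)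
  set e : ℕ → ℝ := fun L => ∫ ω, max (|Y ω| - b L) 0 with he
  have he0 : ∀ L, 0 ≤ e L := fun L => integral_nonneg fun ω => le_max_right _ _
  set E0 : Set Ω := ⋃ z ∈ Finset.Ioc 0 (2 ^ m) ×ˢ Finset.Ioc 0 (2 ^ n),
    {ω | b (K + 1) < |X z.1 z.2 ω|} with hE0
  set E1 : ℕ → Set Ω := fun L =>
    ⋃ i ∈ Finset.range (min (K - L) m + 1) ×ˢ Finset.range (min (K - L) n + 1),
    ⋃ k ∈ Finset.range (2 ^ i.1) ×ˢ Finset.range (2 ^ i.2),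
      {ω | lam L < |∑ x ∈ Finset.Ioc (k.1 * 2 ^ (m - i.1)) ((k.1 + 1) * 2 ^ (m - i.1)),
        ∑ y ∈ Finset.Ioc (k.2 * 2 ^ (n - i.2)) ((k.2 + 1) * 2 ^ (n - i.2)),
          (layer b L (X x y ω) - ∫ ω', layer b L (X x y ω'))|} with hE1
  have hE0b : volume E0 ≤ 2 ^ K * volume {ω | b (K + 1) < |Y ω|} := by
    refine (union_bound _ _ (volume {ω | b (K + 1) < |Y ω|}) (fun z hz => ?_)).trans_eq ?_
    · simp only [Finset.mem_product, Finset.mem_Ioc] at hz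
      exact hdom _ ⟨z, by omega, by omega⟩
    · simp [hK, pow_add]
  have hE1b : ∀ L ∈ Finset.range (K + 1), volume (E1 L) ≤
      ENNReal.ofReal ((((K - L : ℕ) : ℝ) + 1) ^ 2 *
        (C * (2 ^ K * (∫ ω, (min |Y ω| (b (L + 1))) ^ (2 * q)) +
        ((2 : ℝ) ^ K) ^ q * (∫ ω, (min |Y ω| (b (L + 1))) ^ (2 : ℝ)) ^ q)
          / lam L ^ (2 * q))) := by
    intro L _
    refine (union_bound _ _ (ENNReal.ofReal (C * (2 ^ K *
        (∫ ω, (min |Y ω| (b (L + 1))) ^ (2 * q)) +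
        ((2 : ℝ) ^ K) ^ q * (∫ ω, (min |Y ω| (b (L + 1))) ^ (2 : ℝ)) ^ q)
          / lam L ^ (2 * q))) (fun i hi => ?_)).trans ?_
    · simp only [Finset.mem_product, Finset.mem_range] at hi
      exact level_prob q C hq hC X hmeas hH Y hY hdom b hb hb0 L (lam L) (hl L) m n i.1 i.2
        (by omega) (by omega)
    · rw [ENNReal.ofReal_mul (by positivity)]
      gcongr
      rw [Finset.card_product, Finset.card_range, Finset.card_range, ← ENNReal.ofReal_natCast]
      refine ENNReal.ofReal_le_ofReal ?_
      push_cast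
      rw [pow_two]
      gcongr
      · exact min_le_left _ _
      · exact min_le_left _ _
  refine (measure_mono (t := E0 ∪ ⋃ L ∈ Finset.range (K + 1), E1 L) ?_).trans
    ((measure_union_le _ _).trans (add_le_add hE0b
      ((measure_biUnion_finset_le _ _).trans (Finset.sum_le_sum hE1b))))
  intro ω hω
  by_contra hgood
  obtain ⟨u, hu, v, hv, htlt⟩ := hω
  simp only [hE0, hE1, Set.mem_union, Set.mem_iUnion, not_or, not_exists, Finset.mem_product,
    Finset.mem_Ioc, Finset.mem_range, Set.mem_ofPred_eq, not_lt, Prod.forall] at hgood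
  obtain ⟨hg0, hg1⟩ := hgood
  have hZm : ∀ x y, 1 ≤ x → 1 ≤ y → ∀ c, ∫ ω', max (|X x y ω'| - c) 0 ≤ ∫ ω', max (|Y ω'| - c) 0 :=
    fun x y hx hy c => dom_excess (X x y) Y (hmeas x y hx hy) hY
      (fun a => hdom a ⟨(x, y), hx, hy⟩) hYi c
  have hZi : ∀ x y, 1 ≤ x → 1 ≤ y → Integrable (X x y) := fun x y hx hy =>
    dom_integrable (X x y) Y (hmeas x y hx hy) hY (fun a => hdom a ⟨(x, y), hx, hy⟩) hYi
  have hLi : ∀ x y, 1 ≤ x → 1 ≤ y → ∀ L, Integrable fun ω' => layer b L (X x y ω') :=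
    fun x y hx hy L => integrable_layer (X x y) (hmeas x y hx hy) b hb hb0 L
  have hlev : ∀ L ∈ Finset.range (K + 1),
      |∑ x ∈ Finset.Ioc 0 u, ∑ y ∈ Finset.Ioc 0 v,
        (layer b L (X x y ω) - ∫ ω', layer b L (X x y ω'))|
      ≤ (((K - L : ℕ) : ℝ) + 1) ^ 2 * lam L + 2 * 2 ^ L * e L := by
    intro L hL
    rw [Finset.mem_range] at hL
    have h := rect_bound (fun x y => layer b L (X x y ω)) (fun x y => ∫ ω', layer b L (X x y ω'))
      (e L) (lam L) m n (K - L) (by omega) (fun x y _ _ => layer_nonneg b hb L _) (he0 L)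
      (fun x y hx hy => (integral_mono (hLi x y hx hy L) (integrable_excess _ (hZi x y hx hy) _)
        fun ω' => layer_le_excess b L _).trans (hZm x y hx hy (b L))) (hl L).le
      (fun i hi i' hi' k hk k' hk' => hg1 L hL i i' ⟨by omega, by omega⟩ k k' ⟨hk, hk'⟩)
      u v hu hv
    rwa [← hK, Nat.sub_sub_self (by omega : L ≤ K)] at h
  -- the positive part splits into the layers up to a deterministic error, as no value of the
  -- field in the rectangle exceeds the truncation height
  have hsplit : ∀ x ∈ Finset.Ioc 0 u, ∀ y ∈ Finset.Ioc 0 v,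
      max (X x y ω) 0 - ∫ ω', max (X x y ω') 0 =
      (∑ L ∈ Finset.range (K + 1), (layer b L (X x y ω) - ∫ ω', layer b L (X x y ω'))) -
        ((∫ ω', max (X x y ω') 0) - ∫ ω', min (max (X x y ω') 0) (b (K + 1))) := by
    intro x hx y hy
    rw [Finset.mem_Ioc] at hx hy
    have h1 : min (max (X x y ω) 0) (b (K + 1)) = max (X x y ω) 0 :=
      min_eq_left ((max_zero_le_abs _).trans (hg0 x y ⟨by omega, by omega⟩))
    rw [Finset.sum_sub_distrib, sum_layer b hbz, h1,
      ← integral_finsetSum _ (fun L _ => hLi x y (by omega) (by omega) L)]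
    simp only [sum_layer b hbz]
    ring
  have herr : ∀ x ∈ Finset.Ioc 0 u, ∀ y ∈ Finset.Ioc 0 v,
      |(∫ ω', max (X x y ω') 0) - ∫ ω', min (max (X x y ω') 0) (b (K + 1))| ≤ e (K + 1) := by
    intro x hx y hy
    rw [Finset.mem_Ioc] at hx hy
    have hxi := hZi x y (by omega) (by omega)
    have i1 : Integrable fun ω' => max (X x y ω') 0 := hxi.sup (integrable_const 0)
    have i2 : Integrable fun ω' => min (max (X x y ω') 0) (b (K + 1)) :=
      i1.inf (integrable_const _)
    rw [← integral_sub i1 i2, abs_of_nonneg (integral_nonneg fun ω' =>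
      sub_nonneg.2 (min_le_left _ _))]
    refine (integral_mono (i1.sub i2) (integrable_excess _ hxi (b (K + 1))) fun ω' => ?_).trans
      (hZm x y (by omega) (by omega) _)
    have := max_zero_le_abs (X x y ω')
    simp only [Pi.sub_apply]
    rcases min_cases (max (X x y ω') 0) (b (K + 1)) with h | h
    · exact le_max_of_le_right (by linarith)
    · exact le_max_of_le_left (by linarith)
  have hsum : ∑ x ∈ Finset.Ioc 0 u, ∑ y ∈ Finset.Ioc 0 v,
        (max (X x y ω) 0 - ∫ ω', max (X x y ω') 0) =
      (∑ L ∈ Finset.range (K + 1), ∑ x ∈ Finset.Ioc 0 u, ∑ y ∈ Finset.Ioc 0 v,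
        (layer b L (X x y ω) - ∫ ω', layer b L (X x y ω'))) -
      ∑ x ∈ Finset.Ioc 0 u, ∑ y ∈ Finset.Ioc 0 v,
        ((∫ ω', max (X x y ω') 0) - ∫ ω', min (max (X x y ω') 0) (b (K + 1))) := by
    rw [Finset.sum_comm (s := Finset.range (K + 1)), ← Finset.sum_sub_distrib]
    refine Finset.sum_congr rfl fun x hx => ?_
    rw [Finset.sum_comm (s := Finset.range (K + 1)), ← Finset.sum_sub_distrib]
    exact Finset.sum_congr rfl fun y hy => hsplit x hx y hy
  have hlast : |∑ x ∈ Finset.Ioc 0 u, ∑ y ∈ Finset.Ioc 0 v,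
        ((∫ ω', max (X x y ω') 0) - ∫ ω', min (max (X x y ω') 0) (b (K + 1)))|
      ≤ 2 ^ K * e (K + 1) := by
    have h1 : |∑ x ∈ Finset.Ioc 0 u, ∑ y ∈ Finset.Ioc 0 v,
        ((∫ ω', max (X x y ω') 0) - ∫ ω', min (max (X x y ω') 0) (b (K + 1)))|
        ≤ ∑ x ∈ Finset.Ioc 0 u, ∑ y ∈ Finset.Ioc 0 v, e (K + 1) := by
      refine (Finset.abs_sum_le_sum_abs _ _).trans (Finset.sum_le_sum fun x hx => ?_)
      exact (Finset.abs_sum_le_sum_abs _ _).trans (Finset.sum_le_sum fun y hy => herr x hx y hy)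
    refine h1.trans ?_
    simp only [Finset.sum_const, Nat.card_Ioc, tsub_zero, nsmul_eq_mul]
    rw [← mul_assoc, hK, pow_add]
    have hu' : (u : ℝ) ≤ 2 ^ m := by exact_mod_cast hu
    have hv' : (v : ℝ) ≤ 2 ^ n := by exact_mod_cast hv
    have := he0 (m + n + 1)
    gcongr
  have hfin : |∑ x ∈ Finset.Ioc 0 u, ∑ y ∈ Finset.Ioc 0 v,
      (max (X x y ω) 0 - ∫ ω', max (X x y ω') 0)| ≤ t := by
    rw [hsum]
    refine (abs_sub _ _).trans (le_trans (add_le_add ?_ hlast) ht)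
    exact (Finset.abs_sum_le_sum_abs _ _).trans (Finset.sum_le_sum hlev)
  exact absurd htlt (not_lt.2 hfin)

end MaximalBound

/-! ### Summation of truncated moments -/

section Analysis

lemma rlog_pos (x : ℝ) : 0 < rlog x := Real.log_pos (by
  have := le_max_right x 2; linarith)

lemma log_two_le_rlog (x : ℝ) : Real.log 2 ≤ rlog x :=
  Real.log_le_log (by norm_num) (le_max_right x 2)

lemma summable_poly_geom (k : ℕ) (x : ℝ) (hx0 : 0 ≤ x) (hx1 : x < 1) :
    Summable fun j : ℕ => ((j : ℝ) + 1) ^ k * x ^ j := by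
  rcases hx0.eq_or_lt with rfl | hx
  · refine summable_of_ne_finset_zero (s := {0}) fun j hj => ?_
    have : j ≠ 0 := by simpa using hj
    simp [this]
  · have h := summable_pow_mul_geometric_of_norm_lt_one k
      (r := x) (by rw [Real.norm_of_nonneg hx0]; exact hx1)
    have h2 := ((summable_nat_add_iff 1).2 h).mul_left x⁻¹
    refine h2.congr fun j => ?_
    push_cast
    rw [pow_succ]
    field_simp

/-- The dyadic weights `(L + 1) β^{-rL}` summed against truncated powers of `y` reproduce
`y^p log y`: the terms with `β^L ≤ y` grow geometrically, those with `β^L > y` decay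
geometrically, and the weight `L + 1` at the crossover is of order `log y`. -/
lemma tsum_trunc_le (β p r : ℝ) (hβ : 1 < β) (hp : 0 < p) (hr : 0 < r) :
    ∃ C : ℝ, 0 ≤ C ∧ ∀ y : ℝ, 0 ≤ y →
      ∑' L : ℕ, ENNReal.ofReal (((L : ℝ) + 1) * (β ^ (-r)) ^ L * (min y (β ^ L)) ^ (p + r))
        ≤ ENNReal.ofReal (C * (y ^ p * rlog y)) := by
  have hβ0 : 0 < β := by linarith
  set P := β ^ p with hP
  set R := β ^ (-r) with hR
  have hP1 : 1 < P := Real.one_lt_rpow hβ hp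
  have hR0 : 0 < R := Real.rpow_pos_of_pos hβ0 _
  have hR1 : R < 1 := Real.rpow_lt_one_of_one_lt_of_neg hβ (by linarith)
  have hS := summable_poly_geom 1 R hR0.le hR1
  simp only [pow_one] at hS
  set S := ∑' j : ℕ, ((j : ℝ) + 1) * R ^ j with hSdef
  have hS0 : 0 ≤ S := tsum_nonneg fun j => by positivity
  have hPow : ∀ L : ℕ, (β ^ L) ^ p = P ^ L := fun L => by
    rw [hP, ← Real.rpow_natCast_mul hβ0.le, mul_comm, Real.rpow_mul_natCast hβ0.le]
  have hRow : ∀ L : ℕ, R ^ L * (β ^ L) ^ r = 1 := fun L => by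
    rw [hR, ← Real.rpow_natCast_mul hβ0.le, ← Real.rpow_mul_natCast hβ0.le,
      ← Real.rpow_add hβ0]
    simp [mul_comm]
  have hlogβ : 0 < Real.log β := Real.log_pos hβ
  have hlog2 : 0 < Real.log 2 := Real.log_pos (by norm_num)
  have hP1' : 0 < P - 1 := by linarith
  refine ⟨(P / (P - 1) + S) * (2 / Real.log 2 + 1 / Real.log β), by positivity, fun y hy => ?_⟩
  have hex : ∃ n : ℕ, y < β ^ n := pow_unbounded_of_one_lt y hβ
  classical
  set n := Nat.find hex with hn
  have hn1 : y < β ^ n := Nat.find_spec hex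
  have hn2 : ∀ L < n, β ^ L ≤ y := fun L hL => not_lt.1 (Nat.find_min hex hL)
  have hyp : 0 ≤ y ^ p := Real.rpow_nonneg hy p
  have hPn : (n : ℝ) * P ^ n ≤ n * (P * y ^ p) := by
    rcases Nat.eq_zero_or_pos n with h0 | h0
    · simp [h0]
    · have h1 := hn2 (n - 1) (by omega)
      have h2 : P ^ n = P * P ^ (n - 1) := by rw [← pow_succ']; congr 1; omega
      rw [h2, ← hPow (n - 1)]
      gcongr
  have hnlog : (n : ℝ) + 1 ≤ (2 / Real.log 2 + 1 / Real.log β) * rlog y := by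
    have hl2 := log_two_le_rlog y
    have h1 : 2 ≤ 2 / Real.log 2 * rlog y := by
      rw [div_mul_eq_mul_div, le_div_iff₀ hlog2]; linarith
    have h2 : (n : ℝ) - 1 ≤ 1 / Real.log β * rlog y := by
      rw [one_div_mul_eq_div, le_div_iff₀ hlogβ]
      rcases Nat.eq_zero_or_pos n with h0 | h0
      · rw [h0]; push_cast; have := rlog_pos y; linarith
      · have h3 := hn2 (n - 1) (by omega)
        have h4 : Real.log (β ^ (n - 1)) ≤ rlog y :=
          Real.log_le_log (by positivity) (h3.trans (le_max_left y 2))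
        rw [Real.log_pow, Nat.cast_sub h0] at h4
        exact_mod_cast h4
    linarith
  have hhead : ∑ L ∈ Finset.range n, ENNReal.ofReal (((L : ℝ) + 1) * R ^ L *
      (min y (β ^ L)) ^ (p + r)) ≤ ENNReal.ofReal (n * (P / (P - 1)) * y ^ p) := by
    rw [← ENNReal.ofReal_sum_of_nonneg (fun L _ => by positivity)]
    refine ENNReal.ofReal_le_ofReal ?_
    calc ∑ L ∈ Finset.range n, ((L : ℝ) + 1) * R ^ L * (min y (β ^ L)) ^ (p + r)
        ≤ ∑ L ∈ Finset.range n, (n : ℝ) * P ^ L := by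
          refine Finset.sum_le_sum fun L hL => ?_
          rw [Finset.mem_range] at hL
          rw [min_eq_right (hn2 L hL), Real.rpow_add (by positivity), hPow,
            mul_assoc, mul_left_comm (R ^ L), hRow, mul_one]
          have : (L : ℝ) + 1 ≤ n := by exact_mod_cast hL
          gcongr
      _ = n * ((P ^ n - 1) / (P - 1)) := by
          rw [← Finset.mul_sum, geom_sum_eq hP1.ne']
      _ ≤ n * (P / (P - 1)) * y ^ p := by
          have h1 : (n : ℝ) * ((P ^ n - 1) / (P - 1)) = (n * P ^ n - n) / (P - 1) := by ring
          have h2 : (n : ℝ) * (P / (P - 1)) * y ^ p = (n * (P * y ^ p)) / (P - 1) := by ring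
          rw [h1, h2]
          refine div_le_div_of_nonneg_right ?_ hP1'.le
          have : (0 : ℝ) ≤ n := by positivity
          linarith
  have htail : ∑' i : ℕ, ENNReal.ofReal ((((i + n : ℕ) : ℝ) + 1) * R ^ (i + n) *
      (min y (β ^ (i + n))) ^ (p + r)) ≤ ENNReal.ofReal ((n + 1) * S * y ^ p) := by
    have hc : ∀ i : ℕ, ENNReal.ofReal ((((i + n : ℕ) : ℝ) + 1) * R ^ (i + n) *
        (min y (β ^ (i + n))) ^ (p + r))
        ≤ ENNReal.ofReal (((n : ℝ) + 1) * y ^ p * (((i : ℝ) + 1) * R ^ i)) := by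
      intro i
      refine ENNReal.ofReal_le_ofReal ?_
      have h1 : (min y (β ^ (i + n))) ^ (p + r) ≤ y ^ p * y ^ r := by
        rw [← Real.rpow_add_of_nonneg hy hp.le hr.le]
        exact Real.rpow_le_rpow (le_min hy (by positivity)) (min_le_left _ _) (by linarith)
      have h2 : R ^ n * y ^ r ≤ 1 := by
        rw [← hRow n]; gcongr
      have h3 : (((i + n : ℕ) : ℝ) + 1) ≤ (n + 1) * (i + 1) := by
        push_cast
        have : (0 : ℝ) ≤ (n : ℝ) * i := by positivity
        linarith
      calc (((i + n : ℕ) : ℝ) + 1) * R ^ (i + n) * (min y (β ^ (i + n))) ^ (p + r)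
          ≤ ((n + 1) * (i + 1)) * R ^ (i + n) * (y ^ p * y ^ r) := by gcongr
        _ = ((n + 1) * (i + 1)) * R ^ i * y ^ p * (R ^ n * y ^ r) := by rw [pow_add]; ring
        _ ≤ ((n + 1) * (i + 1)) * R ^ i * y ^ p * 1 := by gcongr
        _ = _ := by ring
    refine (ENNReal.tsum_le_tsum hc).trans_eq ?_
    rw [← ENNReal.ofReal_tsum_of_nonneg (fun i => by positivity) (hS.mul_left _), tsum_mul_left]
    congr 1; rw [← hSdef]; ring
  rw [← Summable.sum_add_tsum_nat_add' (k := n) ENNReal.summable]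
  refine (add_le_add hhead htail).trans ?_
  rw [← ENNReal.ofReal_add (by positivity) (by positivity)]
  refine ENNReal.ofReal_le_ofReal ?_
  have hPP : 0 < P / (P - 1) := by positivity
  calc (n : ℝ) * (P / (P - 1)) * y ^ p + (n + 1) * S * y ^ p
      ≤ (P / (P - 1) + S) * (n + 1) * y ^ p := by nlinarith
    _ ≤ (P / (P - 1) + S) * ((2 / Real.log 2 + 1 / Real.log β) * rlog y) * y ^ p := by gcongr
    _ = _ := by ring

/-- Cauchy product estimate, using `K + 1 ≤ (L + 1) (K - L + 1)`. -/
lemma cauchy_summable (a : ℕ → ℝ) (x s : ℝ) (ha : ∀ L, 0 ≤ a L) (hx : 0 < x) (hs : x < s)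
    (hsum : Summable fun L : ℕ => ((L : ℝ) + 1) * x ^ L * a L) :
    Summable fun K : ℕ => ∑ L ∈ Finset.range (K + 1),
      ((K : ℝ) + 1) * (((K - L : ℕ) : ℝ) + 1) ^ 2 * x ^ K / s ^ (K - L) * a L := by
  have hs0 : 0 < s := hx.trans hs
  have h2 := summable_poly_geom 3 (x / s) (by positivity) ((div_lt_one hs0).2 hs)
  have h := summable_norm_sum_mul_range_of_summable_norm hsum.norm h2.norm
  refine Summable.of_nonneg_of_le (fun K => ?_) (fun K => ?_) h
  · refine Finset.sum_nonneg fun L _ => ?_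
    have := ha L
    positivity
  · refine le_trans (Finset.sum_le_sum fun L hL => ?_) (le_abs_self _)
    rw [Finset.mem_range] at hL
    have hK : K = L + (K - L) := by omega
    obtain ⟨j, hj⟩ : ∃ j, j = K - L := ⟨_, rfl⟩
    rw [← hj] at hK ⊢
    subst hK
    have := ha L
    calc (((L + j : ℕ) : ℝ) + 1) * ((j : ℝ) + 1) ^ 2 * x ^ (L + j) / s ^ j * a L
        ≤ (((L : ℝ) + 1) * (j + 1)) * ((j : ℝ) + 1) ^ 2 * x ^ (L + j) / s ^ j * a L := by
          gcongr
          push_cast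
          have : (0 : ℝ) ≤ (L : ℝ) * j := by positivity
          linarith
      _ = ((L : ℝ) + 1) * x ^ L * a L * (((j : ℝ) + 1) ^ 3 * (x / s) ^ j) := by
          rw [pow_add, div_pow]; ring

end Analysis

section Moments

variable {Ω : Type*} [MeasureSpace Ω] [IsProbabilityMeasure (volume : Measure Ω)]

/-- The moment `E|Y|^p log|Y|` controls the weighted truncated moments of the higher order
`p + r`. -/
lemma summable_trunc_moments (β p r : ℝ) (hβ : 1 < β) (hp : 0 < p) (hr : 0 < r)
    (Y : Ω → ℝ) (hY : Measurable Y) (hmom : Integrable fun ω => |Y ω| ^ p * rlog |Y ω|) :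
    Summable fun L : ℕ => ((L : ℝ) + 1) * (β ^ (-r)) ^ L * ∫ ω, (min |Y ω| (β ^ L)) ^ (p + r) := by
  obtain ⟨C, hC0, hC⟩ := tsum_trunc_le β p r hβ hp hr
  have hβ0 : 0 < β := by linarith
  have hR0 : 0 < β ^ (-r) := Real.rpow_pos_of_pos hβ0 _
  have hm0 : ∀ L : ℕ, ∀ ω, 0 ≤ (min |Y ω| (β ^ L)) ^ (p + r) := fun L ω =>
    Real.rpow_nonneg (le_min (abs_nonneg _) (by positivity)) _
  have key : ∑' L : ℕ, ENNReal.ofReal (((L : ℝ) + 1) * (β ^ (-r)) ^ L *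
      ∫ ω, (min |Y ω| (β ^ L)) ^ (p + r)) ≠ ⊤ := by
    have h1 : ∀ L : ℕ, ENNReal.ofReal (((L : ℝ) + 1) * (β ^ (-r)) ^ L *
        ∫ ω, (min |Y ω| (β ^ L)) ^ (p + r)) =
        ∫⁻ ω, ENNReal.ofReal (((L : ℝ) + 1) * (β ^ (-r)) ^ L * (min |Y ω| (β ^ L)) ^ (p + r)) := by
      intro L
      rw [← integral_const_mul]
      refine ofReal_integral_eq_lintegral_ofReal
        ((integrable_min_rpow Y hY _ _ (by positivity) (by linarith)).const_mul _)
        (ae_of_all _ fun ω => mul_nonneg (by positivity) (hm0 L ω))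
    simp_rw [h1]
    rw [← lintegral_tsum fun L => ((((hY.abs.min measurable_const).pow_const _).const_mul
      _).ennreal_ofReal).aemeasurable]
    refine ne_top_of_le_ne_top (hmom.const_mul C).lintegral_lt_top.ne ?_
    exact lintegral_mono fun ω => hC _ (abs_nonneg _)
  refine (ENNReal.summable_toReal key).congr fun L => ?_
  exact ENNReal.toReal_ofReal (mul_nonneg (by positivity) (integral_nonneg (hm0 L)))

lemma integrable_rpow_of_le (p s : ℝ) (hs : 0 ≤ s) (hsp : s ≤ p)
    (Y : Ω → ℝ) (hY : Measurable Y) (hmom : Integrable fun ω => |Y ω| ^ p * rlog |Y ω|) :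
    Integrable fun ω => |Y ω| ^ s := by
  have hlog2 : 0 < Real.log 2 := Real.log_pos (by norm_num)
  refine ((integrable_const (1 : ℝ)).add (hmom.const_mul (1 / Real.log 2))).mono'
    (hY.abs.pow_const s).aestronglyMeasurable (ae_of_all _ fun ω => ?_)
  rw [Real.norm_of_nonneg (by positivity)]
  have h0 : 0 ≤ |Y ω| ^ p := by positivity
  have h1 : |Y ω| ^ p ≤ 1 / Real.log 2 * (|Y ω| ^ p * rlog |Y ω|) := by
    rw [one_div_mul_eq_div, le_div_iff₀ hlog2]
    exact mul_le_mul_of_nonneg_left (log_two_le_rlog _) h0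
  have h2 : |Y ω| ^ s ≤ 1 + |Y ω| ^ p := by
    rcases le_total |Y ω| 1 with h | h
    · have := Real.rpow_le_one (abs_nonneg _) h hs
      linarith
    · have := Real.rpow_le_rpow_of_exponent_le h hsp
      linarith
  simp only [Pi.add_apply]
  linarith

/-- The truncation heights: `0`, then the powers of `β`. -/
def height (β : ℝ) : ℕ → ℝ
  | 0 => 0
  | L + 1 => β ^ L

lemma height_monotone (β : ℝ) (hβ : 1 ≤ β) : Monotone (height β) := by
  refine monotone_nat_of_le_succ fun L => ?_
  cases L with
  | zero => simp [height]
  | succ L => exact pow_le_pow_right₀ hβ (Nat.le_succ L)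

/-- The deterministic error of the truncation and discretisation is of smaller order than
`β ^ K = 2 ^ (α K)`: the excesses satisfy `E(|Y| - β^L)⁺ = o((β / 2)^L)` because
`E|Y|^(1/α) < ∞`. -/
lemma error_small (p α : ℝ) (hα1 : 0 < α) (hα2 : α ≤ 1) (hαp : 1 ≤ α * p)
    (Y : Ω → ℝ) (hY : Measurable Y) (hmom : Integrable fun ω => |Y ω| ^ p * rlog |Y ω|)
    (δ : ℝ) (hδ : 0 < δ) :
    ∀ᶠ K : ℕ in atTop,
      ∑ L ∈ Finset.range (K + 1), 2 * 2 ^ L * (∫ ω, max (|Y ω| - height (2 ^ α) L) 0)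
        + 2 ^ K * (∫ ω, max (|Y ω| - height (2 ^ α) (K + 1)) 0) ≤ δ * ((2 : ℝ) ^ α) ^ K := by
  set β : ℝ := 2 ^ α with hβdef
  have hβ1 : 1 < β := Real.one_lt_rpow (by norm_num) hα1
  have hβ0 : 0 < β := by linarith
  set e : ℕ → ℝ := fun L => ∫ ω, max (|Y ω| - height β L) 0 with he
  have he0 : ∀ L, 0 ≤ e L := fun L => integral_nonneg fun ω => le_max_right _ _
  have hp1 : 1 / α ≤ p := by rw [div_le_iff₀ hα1]; linarith
  have h1α : 1 ≤ 1 / α := by rw [le_div_iff₀ hα1]; linarith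
  have hYi : Integrable fun ω => |Y ω| := by
    simpa using integrable_rpow_of_le p 1 (by norm_num) (by linarith) Y hY hmom
  have hYα := integrable_rpow_of_le p (1 / α) (by linarith) hp1 Y hY hmom
  have h2β : (2 : ℝ) / β = β ^ (1 / α - 1) := by
    rw [Real.rpow_sub hβ0, Real.rpow_one, hβdef, ← Real.rpow_mul (by norm_num),
      mul_one_div_cancel hα1.ne', Real.rpow_one]
  have hratio : 1 ≤ (2 : ℝ) / β := by
    rw [h2β]; exact Real.one_le_rpow hβ1.le (by linarith)
  have hpt : ∀ L : ℕ, ∀ y : ℝ, 0 ≤ y →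
      (2 / β) ^ L * max (y - height β L) 0 ≤ y + 2 / β * y ^ (1 / α) := by
    intro L y hy
    have hyα : 0 ≤ y ^ (1 / α) := Real.rpow_nonneg hy _
    cases L with
    | zero =>
      simp only [height, pow_zero, sub_zero, one_mul, max_eq_left hy]
      have : 0 ≤ 2 / β * y ^ (1 / α) := by positivity
      linarith
    | succ L =>
      simp only [height]
      rcases le_total y (β ^ L) with h | h
      · rw [max_eq_right (by linarith), mul_zero]; positivity
      · have hypos : 0 < y := lt_of_lt_of_le (by positivity) h
        have h1 : (2 / β) ^ L ≤ y ^ (1 / α - 1) := by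
          rw [h2β, ← Real.rpow_mul_natCast hβ0.le, mul_comm, Real.rpow_natCast_mul hβ0.le]
          exact Real.rpow_le_rpow (by positivity) h (by linarith)
        have h2 : max (y - β ^ L) 0 ≤ y := max_le (by linarith [pow_pos hβ0 L]) hy
        calc (2 / β) ^ (L + 1) * max (y - β ^ L) 0
            = 2 / β * ((2 / β) ^ L * max (y - β ^ L) 0) := by rw [pow_succ]; ring
          _ ≤ 2 / β * (y ^ (1 / α - 1) * y) := by gcongr
          _ = 2 / β * y ^ (1 / α) := by
              rw [← Real.rpow_add_one hypos.ne']; ring_nf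
          _ ≤ _ := by linarith
  -- dominated convergence: the integrand vanishes as soon as `β ^ (L - 1)` exceeds `|Y ω|`
  have hc : Tendsto (fun L => (2 / β) ^ L * e L) atTop (nhds 0) := by
    have h := tendsto_integral_of_dominated_convergence (μ := (volume : Measure Ω))
      (F := fun L ω => (2 / β) ^ L * max (|Y ω| - height β L) 0) (f := fun _ => 0)
      (fun ω => |Y ω| + 2 / β * |Y ω| ^ (1 / α)) (fun L => by fun_prop)
      (hYi.add (hYα.const_mul _))
      (fun L => ae_of_all _ fun ω => by
        rw [Real.norm_of_nonneg (by positivity)]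
        exact hpt L _ (abs_nonneg _))
      (ae_of_all _ fun ω => by
        obtain ⟨N, hN⟩ := pow_unbounded_of_one_lt |Y ω| hβ1
        refine tendsto_const_nhds.congr' ?_
        filter_upwards [eventually_ge_atTop (N + 1)] with L hL
        have : β ^ N ≤ height β L := height_monotone β hβ1.le hL
        rw [max_eq_right (by linarith), mul_zero])
    simpa only [integral_const_mul, integral_zero] using h
  have hlo : (fun L : ℕ => β ^ L * ((2 / β) ^ L * e L)) =o[atTop] fun L : ℕ => β ^ L := by
    have := (Asymptotics.isBigO_refl (fun L : ℕ => β ^ L) atTop).mul_isLittleO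
      ((Asymptotics.isLittleO_one_iff ℝ).2 hc)
    simpa using this
  have hdiv : Tendsto (fun n => ∑ L ∈ Finset.range n, β ^ L) atTop atTop := by
    refine tendsto_atTop_mono (fun n => ?_) tendsto_natCast_atTop_atTop
    have : ∑ L ∈ Finset.range n, (1 : ℝ) ≤ ∑ L ∈ Finset.range n, β ^ L :=
      Finset.sum_le_sum fun L _ => one_le_pow₀ hβ1.le
    simpa using this
  have hs := hlo.sum_range (fun L => (by positivity : 0 ≤ β ^ L)) hdiv
  set c0 := δ * (β - 1) / (2 * β ^ 2) with hc0
  have hβm : 0 < β - 1 := by linarith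
  have hc0' : 0 < c0 := by positivity
  have hev := (tendsto_add_atTop_nat 2).eventually (hs.bound hc0')
  filter_upwards [hev] with K hK
  have hterm : ∀ L : ℕ, β ^ L * ((2 / β) ^ L * e L) = 2 ^ L * e L := fun L => by
    rw [← mul_assoc, ← mul_pow, mul_div_cancel₀ _ hβ0.ne']
  simp only [hterm] at hK
  rw [Real.norm_of_nonneg (Finset.sum_nonneg fun L _ => mul_nonneg (by positivity) (he0 L)),
    Real.norm_of_nonneg (Finset.sum_nonneg fun L _ => by positivity),
    geom_sum_eq hβ1.ne'] at hK
  have h1 : c0 * ((β ^ (K + 2) - 1) / (β - 1)) ≤ δ / 2 * β ^ K := by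
    rw [hc0, pow_add]
    calc δ * (β - 1) / (2 * β ^ 2) * ((β ^ K * β ^ 2 - 1) / (β - 1))
        ≤ δ * (β - 1) / (2 * β ^ 2) * ((β ^ K * β ^ 2) / (β - 1)) := by gcongr; linarith
      _ = _ := by field_simp
  rw [Finset.sum_range_succ] at hK
  have h2 : ∑ L ∈ Finset.range (K + 1), 2 * 2 ^ L * e L
      = 2 * ∑ L ∈ Finset.range (K + 1), 2 ^ L * e L := by
    rw [Finset.mul_sum]; exact Finset.sum_congr rfl fun L _ => by ring
  have h3 : 0 ≤ 2 ^ K * e (K + 1) := mul_nonneg (by positivity) (he0 _)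
  have h4 : (2 : ℝ) ^ (K + 1) * e (K + 1) = 2 * (2 ^ K * e (K + 1)) := by ring
  change ∑ L ∈ Finset.range (K + 1), 2 * 2 ^ L * e L + 2 ^ K * e (K + 1) ≤ δ * β ^ K
  rw [h2]
  linarith

end Moments

/-! ### Tail bounds along dyadic levels -/

section Final

lemma condHWith_mono {Ω : Type*} [MeasureSpace Ω] {Λ : Type*} {q C C' : ℝ} (hC : C ≤ C') {X : Λ → Ω → ℝ}
    (h : CondHWith q C X) : CondHWith q C' X := by
  intro I hI f h1 h2 h3 h4 h5
  refine (h I hI f h1 h2 h3 h4 h5).trans (mul_le_mul_of_nonneg_right hC ?_)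
  obtain ⟨l, hl⟩ := hI
  refine add_nonneg (mul_nonneg (by positivity) ?_) (mul_nonneg (by positivity) ?_)
  · exact (integral_nonneg fun ω => by positivity).trans
      (Finset.le_sup' (fun l => ∫ ω, |f l (X l ω)| ^ (2 * q)) hl)
  · exact (Real.rpow_nonneg (integral_nonneg fun ω => by positivity) q).trans
      (Finset.le_sup' (fun l => (∫ ω, (f l (X l ω)) ^ 2) ^ q) hl)

/-- Condition (H_{2q}) is invariant under a change of sign: apply it to `x ↦ -f (-x)`. -/
lemma condHWith_neg {Ω : Type*} [MeasureSpace Ω] {Λ : Type*} {q C : ℝ} {X : Λ → Ω → ℝ}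
    (h : CondHWith q C X) : CondHWith q C fun l ω => -X l ω := by
  intro I hI f h1 h2 h3 h4 h5
  have e : ∀ ω, ∑ l ∈ I, (-f l (-X l ω) - ∫ ω', -f l (-X l ω')) =
      -∑ l ∈ I, (f l (-X l ω) - ∫ ω', f l (-X l ω')) := fun ω => by
    rw [← Finset.sum_neg_distrib]
    exact Finset.sum_congr rfl fun l _ => by rw [integral_neg]; ring
  have := h I hI (fun l x => -f l (-x))
    (fun l hl x y hxy => neg_le_neg (h1 l hl (neg_le_neg hxy)))
    (fun l hl => (h2 l hl).neg)
    (fun l hl => by simpa only [neg_sq] using h3 l hl)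
    (fun l hl => by simpa only [abs_neg] using h4 l hl)
    (by simpa only [e, abs_neg] using h5)
  simpa only [e, abs_neg, neg_sq] using this

variable {Ω : Type*} [MeasureSpace Ω] [IsProbabilityMeasure (volume : Measure Ω)]

/-- Markov's inequality for the truncated variable, which needs no moment of order `s`. -/
lemma markov_min (β s : ℝ) (hβ : 0 < β) (hs : 0 < s) (Y : Ω → ℝ) (hY : Measurable Y) (K : ℕ) :
    volume {ω | β ^ K < |Y ω|} ≤
      ENNReal.ofReal ((∫ ω, (min |Y ω| (β ^ K)) ^ s) / (β ^ s) ^ K) := by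
  have hK : (β ^ s) ^ K = (β ^ K) ^ s := by
    rw [← Real.rpow_natCast_mul hβ.le, mul_comm, Real.rpow_mul_natCast hβ.le]
  have hpos : 0 < (β ^ K) ^ s := by positivity
  have h := mul_meas_ge_le_integral_of_nonneg (μ := (volume : Measure Ω))
    (f := fun ω => (min |Y ω| (β ^ K)) ^ s) (ae_of_all _ fun ω => by
      have : 0 ≤ min |Y ω| (β ^ K) := le_min (abs_nonneg _) (by positivity)
      positivity) (integrable_min_rpow Y hY _ _ (by positivity) hs.le) ((β ^ K) ^ s)
  have h2 : volume.real {ω | β ^ K < |Y ω|} ≤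
      volume.real {ω | (β ^ K) ^ s ≤ (min |Y ω| (β ^ K)) ^ s} := by
    refine measureReal_mono fun ω hω => ?_
    simp only [Set.mem_ofPred_eq] at hω ⊢
    rw [min_eq_right hω.le]
  rw [← ofReal_measureReal]
  refine ENNReal.ofReal_le_ofReal ?_
  rw [hK, le_div_iff₀ hpos, mul_comm]
  exact (mul_le_mul_of_nonneg_left h2 hpos.le).trans h

/-- Tail bound for the positive parts, depending on `(m, n)` through `K = m + n` only and summable
against the weights `(K + 1) 2 ^ ((α p - 1) K)`. The thresholds `lam K L` for the layers decay
geometrically in `K - L`, so that they sum up to a small multiple of `β ^ K`, but slowly enough for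
the moment bounds of the layers to remain summable. -/
lemma pos_part_final (p α q C : ℝ) (hp : 1 ≤ p) (hα1 : 1 / 2 < α) (hα2 : α ≤ 1)
    (hαp : 1 ≤ α * p) (hq1 : 1 ≤ q) (hq2 : p < 2 → q = 1)
    (hq3 : 2 ≤ p → (α * p - 1) / (2 * α - 1) < q) (hC : 0 ≤ C)
    (X : ℕ → ℕ → Ω → ℝ) (hmeas : ∀ m n : ℕ, 1 ≤ m → 1 ≤ n → Measurable (X m n))
    (hH : CondHWith q C fun k : PIdx => X k.1.1 k.1.2)
    (Y : Ω → ℝ) (hY : Measurable Y)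
    (hdom : StochDom (fun k : PIdx => X k.1.1 k.1.2) Y)
    (hmom : Integrable fun ω => |Y ω| ^ p * rlog |Y ω|) (ε : ℝ) (hε : 0 < ε) :
    ∃ V : ℕ → ℝ, (∀ K, 0 ≤ V K) ∧
      (Summable fun K : ℕ => ((K : ℝ) + 1) * ((2 : ℝ) ^ (α * p - 1)) ^ K * V K) ∧
      ∀ m n : ℕ, volume {ω | ∃ u ≤ 2 ^ m, ∃ v ≤ 2 ^ n, ε * ((2 : ℝ) ^ α) ^ (m + n) <
        |∑ x ∈ Ioc 0 u, ∑ y ∈ Ioc 0 v, (max (X x y ω) 0 - ∫ ω', max (X x y ω') 0)|}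
        ≤ ENNReal.ofReal (V (m + n)) := by
  set β : ℝ := 2 ^ α with hβdef
  have hα0 : 0 < α := by linarith
  have hβ1 : 1 < β := Real.one_lt_rpow (by norm_num) hα0
  have hβ0 : 0 < β := by linarith
  have hq0 : 0 < q := by linarith
  have hp0 : 0 < p := by linarith
  have h2α : 0 < 2 * α - 1 := by linarith
  have hq3' : 2 ≤ p → α * p - 1 < q * (2 * α - 1) := fun h =>
    (div_lt_iff₀ h2α).1 (hq3 h)
  have hr : 0 < 2 * q - p := by
    rcases lt_or_ge p 2 with h | h
    · rw [hq2 h]; linarith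
    · have := hq3' h
      by_contra! hcon
      nlinarith
  set w : ℝ := 2 ^ (α * p - 1) with hw
  set Q : ℝ := β ^ (2 * q) with hQ
  set R : ℝ := β ^ (-(2 * q - p)) with hR
  set D : ℝ := w * 2 ^ q / Q with hD
  have hw0 : 0 < w := by positivity
  have hQ0 : 0 < Q := by positivity
  have hR0 : 0 < R := by positivity
  have hD0 : 0 < D := by positivity
  have hR1 : R < 1 := Real.rpow_lt_one_of_one_lt_of_neg hβ1 (by linarith)
  -- ratio of the geometric weights of the `2q`-th moments
  have hwR : w * 2 / Q = R := by
    rw [hw, hQ, hR, hβdef, ← Real.rpow_mul (by norm_num), ← Real.rpow_mul (by norm_num),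
      ← Real.rpow_add_one (by norm_num), ← Real.rpow_sub (by norm_num)]
    congr 1; ring
  -- For `p ≥ 2` this is exactly the hypothesis `(α p - 1) / (2 α - 1) < q`.
  have hD1 : D < 1 := by
    rw [hD, hw, hQ, hβdef, ← Real.rpow_mul (by norm_num), ← Real.rpow_add (by norm_num),
      ← Real.rpow_sub (by norm_num)]
    refine Real.rpow_lt_one_of_one_lt_of_neg (by norm_num) ?_
    rcases lt_or_ge p 2 with h | h
    · rw [hq2 h]; nlinarith
    · have := hq3' h
      linarith
  set A : ℕ → ℝ := fun L => ∫ ω, (min |Y ω| (β ^ L)) ^ (2 * q) with hA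
  set B : ℕ → ℝ := fun L => ∫ ω, (min |Y ω| (β ^ L)) ^ (2 : ℝ) with hB
  have hmin0 : ∀ L ω, 0 ≤ min |Y ω| (β ^ L) := fun L ω => le_min (abs_nonneg _) (by positivity)
  have hA0 : ∀ L, 0 ≤ A L := fun L => integral_nonneg fun ω => Real.rpow_nonneg (hmin0 L ω) _
  have hB0 : ∀ L, 0 ≤ B L := fun L => integral_nonneg fun ω => Real.rpow_nonneg (hmin0 L ω) _
  have hsumA : Summable fun L : ℕ => ((L : ℝ) + 1) * R ^ L * A L := by
    have := summable_trunc_moments β p (2 * q - p) hβ1 hp0 hr Y hY hmom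
    simpa only [add_sub_cancel] using this
  -- For `p < 2` one has `q = 1`, and the second moments are the `2q`-th ones; for `p ≥ 2` the
  -- second moments are bounded and the geometric factor `D < 1` suffices.
  have hsumB : Summable fun L : ℕ => ((L : ℝ) + 1) * D ^ L * B L ^ q := by
    rcases lt_or_ge p 2 with h | h
    · have hqe := hq2 h
      have hDR : D = R := by rw [← hwR, hD, hqe, Real.rpow_one]
      refine hsumA.congr fun L => ?_
      simp only [hA, hB, hDR, hqe, Real.rpow_one, mul_one]
    · have hg := (summable_poly_geom 1 D hD0.le hD1).mul_right ((∫ ω, |Y ω| ^ (2 : ℝ)) ^ q)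
      refine Summable.of_nonneg_of_le (fun L => ?_) (fun L => ?_) hg
      · have := hB0 L
        positivity
      · rw [pow_one]
        have hBL : B L ≤ ∫ ω, |Y ω| ^ (2 : ℝ) := by
          refine integral_mono (integrable_min_rpow Y hY _ _ (by positivity) (by norm_num))
            (integrable_rpow_of_le p 2 (by norm_num) h Y hY hmom) fun ω => ?_
          exact Real.rpow_le_rpow (hmin0 L ω) (min_le_left _ _) (by norm_num)
        have := Real.rpow_le_rpow (hB0 L) hBL hq0.le
        gcongr
  -- `σ = ρ ^ (2q)` lies above both ratios `R` and `D`, so `R / σ` and `D / σ` are still below `1`.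
  obtain ⟨σ, hσ, hσ1⟩ := exists_between (max_lt hR1 hD1)
  have hRσ : R < σ := (le_max_left _ _).trans_lt hσ
  have hDσ : D < σ := (le_max_right _ _).trans_lt hσ
  have hσ0 : 0 < σ := hR0.trans hRσ
  set ρ : ℝ := σ ^ (1 / (2 * q)) with hρ
  have hρ0 : 0 < ρ := by positivity
  have hρ1 : ρ < 1 := Real.rpow_lt_one hσ0.le hσ1 (by positivity)
  have hρσ : ρ ^ (2 * q) = σ := by
    rw [hρ, ← Real.rpow_mul hσ0.le, one_div_mul_cancel (by positivity), Real.rpow_one]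
  have hS := summable_poly_geom 2 ρ hρ0.le hρ1
  set S := ∑' j : ℕ, ((j : ℝ) + 1) ^ 2 * ρ ^ j with hSdef
  have hS0 : 0 ≤ S := tsum_nonneg fun j => by positivity
  set c := ε / (2 * (S + 1)) with hc
  have hc0 : 0 < c := by positivity
  have hcS : c * S ≤ ε / 2 := by
    rw [hc, div_mul_eq_mul_div, div_le_iff₀ (by positivity)]
    nlinarith
  set lam : ℕ → ℕ → ℝ := fun K L => c * β ^ K * ρ ^ (K - L) with hlam
  have hlam0 : ∀ K L, 0 < lam K L := fun K L => by positivity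
  have hlamsum : ∀ K, ∑ L ∈ range (K + 1), (((K - L : ℕ) : ℝ) + 1) ^ 2 * lam K L
      ≤ ε / 2 * β ^ K := by
    intro K
    have h1 : ∑ L ∈ range (K + 1), (((K - L : ℕ) : ℝ) + 1) ^ 2 * lam K L =
        c * β ^ K * ∑ L ∈ range (K + 1), (((K - L : ℕ) : ℝ) + 1) ^ 2 * ρ ^ (K - L) := by
      rw [Finset.mul_sum]
      exact Finset.sum_congr rfl fun L _ => by simp only [hlam]; ring
    have h2 : ∑ L ∈ range (K + 1), (((K - L : ℕ) : ℝ) + 1) ^ 2 * ρ ^ (K - L)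
        = ∑ j ∈ range (K + 1), ((j : ℝ) + 1) ^ 2 * ρ ^ j :=
      Finset.sum_range_reflect (fun j : ℕ => ((j : ℝ) + 1) ^ 2 * ρ ^ j) (K + 1)
    have h3 : ∑ j ∈ range (K + 1), ((j : ℝ) + 1) ^ 2 * ρ ^ j ≤ S :=
      hS.sum_le_tsum _ fun j _ => by positivity
    rw [h1, h2]
    calc c * β ^ K * ∑ j ∈ range (K + 1), ((j : ℝ) + 1) ^ 2 * ρ ^ j
        ≤ c * β ^ K * S := by gcongr
      _ = c * S * β ^ K := by ring
      _ ≤ _ := by gcongr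
  have hlamq : ∀ K L, lam K L ^ (2 * q) = c ^ (2 * q) * Q ^ K * σ ^ (K - L) := by
    intro K L
    have e : ∀ (z : ℝ) (k : ℕ), 0 ≤ z → (z ^ k) ^ (2 * q) = (z ^ (2 * q)) ^ k := fun z k hz => by
      rw [← Real.rpow_natCast_mul hz, mul_comm, Real.rpow_mul_natCast hz]
    simp only [hlam]
    rw [Real.mul_rpow (by positivity) (by positivity), Real.mul_rpow (by positivity)
      (by positivity), e _ _ hβ0.le, e _ _ hρ0.le, hρσ]
  obtain ⟨K0, hK0⟩ := eventually_atTop.1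
    (error_small p α hα0 hα2 hαp Y hY hmom (ε / 2) (by positivity))
  set T1 : ℕ → ℝ := fun K => 2 ^ K * (A K / Q ^ K) with hT1
  set T2 : ℕ → ℝ := fun K => ∑ L ∈ range (K + 1), (((K - L : ℕ) : ℝ) + 1) ^ 2 *
    (C * (2 ^ K * A L + ((2 : ℝ) ^ K) ^ q * B L ^ q) / lam K L ^ (2 * q)) with hT2
  -- below the level `K0` the deterministic error may be too large, and the trivial bound `1` is used
  set T3 : ℕ → ℝ := fun K => if K < K0 then 1 else 0 with hT3
  have hterm0 : ∀ K L, 0 ≤ (((K - L : ℕ) : ℝ) + 1) ^ 2 *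
    (C * (2 ^ K * A L + ((2 : ℝ) ^ K) ^ q * B L ^ q) / lam K L ^ (2 * q)) := fun K L => by
    have := hA0 L
    have := hB0 L
    have := hlam0 K L
    positivity
  have hT10 : ∀ K, 0 ≤ T1 K := fun K => by
    have := hA0 K
    positivity
  have hT20 : ∀ K, 0 ≤ T2 K := fun K => Finset.sum_nonneg fun L _ => hterm0 K L
  have hT30 : ∀ K, 0 ≤ T3 K := fun K => by
    simp only [hT3]; split_ifs <;> norm_num
  have hwRK : ∀ K : ℕ, w ^ K * 2 ^ K / Q ^ K = R ^ K := fun K => by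
    rw [← mul_pow, ← div_pow, hwR]
  have hwDK : ∀ K : ℕ, w ^ K * ((2 : ℝ) ^ K) ^ q / Q ^ K = D ^ K := fun K => by
    have : ((2 : ℝ) ^ K) ^ q = (2 ^ q) ^ K := by
      rw [← Real.rpow_natCast_mul (by norm_num), mul_comm, Real.rpow_mul_natCast (by norm_num)]
    rw [this, ← mul_pow, ← div_pow]
  have hs1 : Summable fun K : ℕ => ((K : ℝ) + 1) * w ^ K * T1 K := by
    refine hsumA.congr fun K => ?_
    rw [← hwRK]
    simp only [hT1]
    ring
  have hs2 : Summable fun K : ℕ => ((K : ℝ) + 1) * w ^ K * T2 K := by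
    have ha := cauchy_summable A R σ hA0 hR0 hRσ hsumA
    have hb := cauchy_summable (fun L => B L ^ q) D σ
      (fun L => Real.rpow_nonneg (hB0 L) q) hD0 hDσ hsumB
    refine ((ha.mul_left (C / c ^ (2 * q))).add (hb.mul_left (C / c ^ (2 * q)))).congr
      fun K => ?_
    simp only [hT2]
    rw [Finset.mul_sum, Finset.mul_sum, Finset.mul_sum, ← Finset.sum_add_distrib]
    refine Finset.sum_congr rfl fun L _ => ?_
    rw [hlamq, ← hwRK, ← hwDK]
    have : c ^ (2 * q) ≠ 0 := by positivity
    field_simp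
  have hs3 : Summable fun K : ℕ => ((K : ℝ) + 1) * w ^ K * T3 K := by
    refine summable_of_ne_finset_zero (s := range K0) fun K hK => ?_
    have : ¬ K < K0 := by simpa using hK
    simp [hT3, this]
  refine ⟨fun K => T1 K + T2 K + T3 K, fun K => add_nonneg (add_nonneg (hT10 K) (hT20 K)) (hT30 K),
    ((hs1.add hs2).add hs3).congr fun K => by ring, fun m n => ?_⟩
  rcases lt_or_ge (m + n) K0 with hlt | hge
  · refine prob_le_one.trans ?_
    rw [← ENNReal.ofReal_one]
    refine ENNReal.ofReal_le_ofReal ?_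
    have h1 := hT10 (m + n)
    have h2 := hT20 (m + n)
    simp only [hT3, if_pos hlt]
    linarith
  · have hYi : Integrable Y := by
      have h := integrable_rpow_of_le p 1 (by norm_num) hp Y hY hmom
      simp only [Real.rpow_one] at h
      exact (integrable_norm_iff hY.aestronglyMeasurable).1 h
    have herr := hK0 (m + n) hge
    have hl := hlamsum (m + n)
    refine (pos_part_prob q C hq1 hC X hmeas hH Y hY hdom hYi (height β)
      (height_monotone β hβ1.le) rfl (lam (m + n)) (hlam0 _) m n _ ?_).trans ?_
    · rw [Finset.sum_add_distrib]
      linarith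
    · have h3 := hT30 (m + n)
      rw [ENNReal.ofReal_add (add_nonneg (hT10 _) (hT20 _)) h3,
        ENNReal.ofReal_add (hT10 _) (hT20 _)]
      refine le_add_right (add_le_add ?_ ?_)
      · simp only [hT1]
        rw [ENNReal.ofReal_mul (by positivity), ENNReal.ofReal_pow (by norm_num),
          ENNReal.ofReal_ofNat]
        gcongr
        exact markov_min β (2 * q) hβ0 (by positivity) Y hY (m + n)
      · simp only [hT2]
        rw [ENNReal.ofReal_sum_of_nonneg fun L _ => hterm0 (m + n) L]
        exact le_rfl

end Final

/-! ### Comparison with dyadic blocks, and the two-sided bound -/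

section Summation

lemma lt_maxDS {f : ℕ → ℕ → ℝ} {M N : ℕ} {t : ℝ} (ht : 0 ≤ t) (h : t < maxDS f M N) :
    ∃ u ≤ M, ∃ v ≤ N, t < |∑ x ∈ Ioc 0 u, ∑ y ∈ Ioc 0 v, f x y| := by
  unfold maxDS maxNN at h
  lift t to ℝ≥0 using ht
  rw [NNReal.coe_lt_coe, Finset.lt_sup_iff] at h
  obtain ⟨⟨u, v⟩, huv, h⟩ := h
  simp only [Finset.mem_product, Finset.mem_Icc] at huv
  exact ⟨u, huv.1.2, v, huv.2.2, Real.lt_toNNReal_iff_coe_lt.1 h⟩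

/-- There are `K + 1` pairs `(m, n)` with `m + n = K`; this is where the logarithmic factor in
the moment condition comes from. -/
lemma tsum_prod_add (g : ℕ → ℝ≥0∞) :
    ∑' c : ℕ × ℕ, g (c.1 + c.2) = ∑' K : ℕ, ((K : ℝ≥0∞) + 1) * g K := by
  rw [← (Finset.HasAntidiagonal.sigmaAntidiagonalEquivProd (A := ℕ)).tsum_eq, ENNReal.tsum_sigma']
  refine tsum_congr fun K => ?_
  have : ∀ b : (antidiagonal K), g ((Finset.HasAntidiagonal.sigmaAntidiagonalEquivProd ⟨K, b⟩).1 +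
      (Finset.HasAntidiagonal.sigmaAntidiagonalEquivProd ⟨K, b⟩).2) = g K := fun b => by
    congr 1
    exact mem_antidiagonal.1 b.2
  simp only [this]
  rw [tsum_fintype, Finset.sum_const, Finset.card_univ, Fintype.card_coe,
    Finset.Nat.card_antidiagonal]
  simp

/-- A double series over `M, N ≥ 1` is compared with the series over dyadic blocks
`2 ^ (m - 1) ≤ M < 2 ^ m`, `2 ^ (n - 1) ≤ N < 2 ^ n`, the block having at most `2 ^ (m + n)`
elements. -/
lemma tsum_dyadic_le (G : ℕ × ℕ → ℝ≥0∞) (H : ℕ → ℝ≥0∞)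
    (hGH : ∀ k m n, k.1 + 1 < 2 ^ m → k.2 + 1 < 2 ^ n → 2 ^ m ≤ 2 * (k.1 + 1) →
      2 ^ n ≤ 2 * (k.2 + 1) → G k ≤ H (m + n)) :
    ∑' k, G k ≤ ∑' K : ℕ, ((K : ℝ≥0∞) + 1) * (2 ^ K * H K) := by
  classical
  rw [← tsum_prod_add fun K => 2 ^ K * H K]
  set lev : ℕ → ℕ := fun i => Nat.log 2 (i + 1) + 1 with hlev
  have hup : ∀ i, i + 1 < 2 ^ lev i := fun i => Nat.lt_pow_succ_log_self (by norm_num) _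
  have hlo : ∀ i, 2 ^ lev i ≤ 2 * (i + 1) := fun i => by
    have := Nat.pow_log_le_self 2 (x := i + 1) (by omega)
    simp only [hlev, pow_succ]
    omega
  calc ∑' k, G k ≤ ∑' k : ℕ × ℕ, ∑' c : ℕ × ℕ,
        if c = (lev k.1, lev k.2) then H (c.1 + c.2) else 0 := by
        refine ENNReal.tsum_le_tsum fun k => ?_
        rw [tsum_ite_eq]
        exact hGH k _ _ (hup _) (hup _) (hlo _) (hlo _)
    _ = ∑' c : ℕ × ℕ, ∑' k : ℕ × ℕ,
        if c = (lev k.1, lev k.2) then H (c.1 + c.2) else 0 := ENNReal.tsum_comm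
    _ ≤ ∑' c : ℕ × ℕ, 2 ^ (c.1 + c.2) * H (c.1 + c.2) := by
        refine ENNReal.tsum_le_tsum fun c => ?_
        -- the block `c` is contained in `[0, 2^c.1) × [0, 2^c.2)`
        rw [tsum_eq_sum (s := range (2 ^ c.1) ×ˢ range (2 ^ c.2)) fun k hk => ?_]
        · refine (Finset.sum_le_sum fun k _ => (?_ : _ ≤ H (c.1 + c.2))).trans ?_
          · split_ifs <;> simp
          · rw [Finset.sum_const, Finset.card_product, card_range, card_range, nsmul_eq_mul,
              pow_add]
            push_cast
            exact le_rfl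
        · refine if_neg fun hc => hk ?_
          rw [hc, mem_product, mem_range, mem_range]
          exact ⟨(Nat.lt_succ_self _).trans (hup k.1), (Nat.lt_succ_self _).trans (hup k.2)⟩

end Summation

section TwoSided

variable {Ω : Type*} [MeasureSpace Ω] [IsProbabilityMeasure (volume : Measure Ω)]

/-- Condition (H_{2q}) survives the change of sign, so the bound for the positive parts, applied to
`X` and to `-X`, gives one for the centred field itself. -/
lemma two_sided (p α q : ℝ) (hp : 1 ≤ p) (hα1 : 1 / 2 < α) (hα2 : α ≤ 1)
    (hαp : 1 ≤ α * p) (hq1 : 1 ≤ q) (hq2 : p < 2 → q = 1)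
    (hq3 : 2 ≤ p → (α * p - 1) / (2 * α - 1) < q)
    (X : ℕ → ℕ → Ω → ℝ) (hmeas : ∀ m n : ℕ, 1 ≤ m → 1 ≤ n → Measurable (X m n))
    (hH : CondH q fun k : PIdx => X k.1.1 k.1.2)
    (Y : Ω → ℝ) (hY : Measurable Y)
    (hdom : StochDom (fun k : PIdx => X k.1.1 k.1.2) Y)
    (hmom : Integrable fun ω => |Y ω| ^ p * rlog |Y ω|) (ε : ℝ) (hε : 0 < ε) :
    ∃ V : ℕ → ℝ, (∀ K, 0 ≤ V K) ∧
      (Summable fun K : ℕ => ((K : ℝ) + 1) * ((2 : ℝ) ^ (α * p - 1)) ^ K * V K) ∧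
      ∀ m n : ℕ, volume {ω | ∃ u ≤ 2 ^ m, ∃ v ≤ 2 ^ n, ε * ((2 : ℝ) ^ α) ^ (m + n) <
        |∑ x ∈ Ioc 0 u, ∑ y ∈ Ioc 0 v, (X x y ω - ∫ ω', X x y ω')|}
        ≤ ENNReal.ofReal (V (m + n)) := by
  obtain ⟨C, hC⟩ := hH
  have hC' := condHWith_mono (le_abs_self C) hC
  obtain ⟨V₁, hV₁0, hV₁s, hV₁⟩ := pos_part_final p α q |C| hp hα1 hα2 hαp hq1 hq2 hq3
    (abs_nonneg C) X hmeas hC' Y hY hdom hmom (ε / 2) (by positivity)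
  obtain ⟨V₂, hV₂0, hV₂s, hV₂⟩ := pos_part_final p α q |C| hp hα1 hα2 hαp hq1 hq2 hq3
    (abs_nonneg C) (fun m n ω => -X m n ω) (fun m n hm hn => (hmeas m n hm hn).neg)
    (condHWith_neg hC') Y hY (fun x l => by simpa only [abs_neg] using hdom x l) hmom (ε / 2)
    (by positivity)
  have hYi : Integrable Y := by
    have h := integrable_rpow_of_le p 1 (by norm_num) hp Y hY hmom
    simp only [Real.rpow_one] at h
    exact (integrable_norm_iff hY.aestronglyMeasurable).1 h
  have hXi : ∀ x y, 1 ≤ x → 1 ≤ y → Integrable (X x y) := fun x y hx hy =>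
    dom_integrable (X x y) Y (hmeas x y hx hy) hY (fun t => hdom t ⟨(x, y), hx, hy⟩) hYi
  refine ⟨fun K => V₁ K + V₂ K, fun K => add_nonneg (hV₁0 K) (hV₂0 K),
    (hV₁s.add hV₂s).congr fun K => by ring, fun m n => ?_⟩
  rw [ENNReal.ofReal_add (hV₁0 _) (hV₂0 _)]
  refine le_trans (measure_mono ?_) ((measure_union_le _ _).trans
    (add_le_add (hV₁ m n) (hV₂ m n)))
  rintro ω ⟨u, hu, v, hv, h⟩
  by_contra hcon
  rw [Set.mem_union, not_or] at hcon
  obtain ⟨h1, h2⟩ := hcon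
  have h1' := not_lt.1 fun h' => h1 ⟨u, hu, v, hv, h'⟩
  have h2' := not_lt.1 fun h' => h2 ⟨u, hu, v, hv, h'⟩
  have hsplit : ∑ x ∈ Ioc 0 u, ∑ y ∈ Ioc 0 v, (X x y ω - ∫ ω', X x y ω') =
      (∑ x ∈ Ioc 0 u, ∑ y ∈ Ioc 0 v, (max (X x y ω) 0 - ∫ ω', max (X x y ω') 0)) -
      ∑ x ∈ Ioc 0 u, ∑ y ∈ Ioc 0 v, (max (-X x y ω) 0 - ∫ ω', max (-X x y ω') 0) := by
    rw [← Finset.sum_sub_distrib]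
    refine Finset.sum_congr rfl fun x hx => ?_
    rw [← Finset.sum_sub_distrib]
    refine Finset.sum_congr rfl fun y hy => ?_
    have hi := hXi x y (mem_Ioc.1 hx).1 (mem_Ioc.1 hy).1
    have e1 : ∫ ω', X x y ω' = (∫ ω', max (X x y ω') 0) - ∫ ω', max (-X x y ω') 0 := by
      rw [← integral_sub hi.pos_part hi.neg_part]
      exact integral_congr_ae (ae_of_all _ fun ω' => (max_zero_sub_max_neg_zero_eq_self _).symm)
    have e2 := max_zero_sub_max_neg_zero_eq_self (X x y ω)
    linarith
  rw [hsplit] at h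
  have := abs_sub (∑ x ∈ Ioc 0 u, ∑ y ∈ Ioc 0 v, (max (X x y ω) 0 - ∫ ω', max (X x y ω') 0))
    (∑ x ∈ Ioc 0 u, ∑ y ∈ Ioc 0 v, (max (-X x y ω) 0 - ∫ ω', max (-X x y ω') 0))
  linarith

end TwoSided

/-! ### The convergence of the double series -/

/-- Hsu–Robbins–Erdős–Spitzer–Baum–Katz theorem for dependent random fields
(sufficiency part). -/
theorem baum_katz_dependent_fields
    {Ω : Type*} [MeasureSpace Ω] [IsProbabilityMeasure (volume : Measure Ω)]
    (p α q : ℝ) (hp : 1 ≤ p) (hα1 : 1 / 2 < α) (hα2 : α ≤ 1) (hαp : 1 ≤ α * p)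
    (hq1 : 1 ≤ q) (hq2 : p < 2 → q = 1) (hq3 : 2 ≤ p → (α * p - 1) / (2 * α - 1) < q)
    (X : ℕ → ℕ → Ω → ℝ)
    (hmeas : ∀ m n : ℕ, 1 ≤ m → 1 ≤ n → Measurable (X m n))
    (hH : CondH q fun k : PIdx => X k.1.1 k.1.2)
    (Y : Ω → ℝ) (hYmeas : Measurable Y)
    (hdom : StochDom (fun k : PIdx => X k.1.1 k.1.2) Y)
    (hmom : Integrable fun ω => |Y ω| ^ p * rlog |Y ω|) :
    ∀ ε : ℝ, 0 < ε →
      Summable fun k : ℕ × ℕ =>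
        (((k.1 + 1) * (k.2 + 1) : ℕ) : ℝ) ^ (α * p - 2) *
          (volume {ω | ε * (((k.1 + 1) * (k.2 + 1) : ℕ) : ℝ) ^ α <
            maxDS (fun i j => X i j ω - ∫ ω', X i j ω') (k.1 + 1) (k.2 + 1)}).toReal := by
  intro ε hε
  have hα0 : 0 < α := by linarith
  -- `M N ≥ 2 ^ (m + n) / 4` on the dyadic block, so the factor `4 ^ α` is lost in the threshold.
  obtain ⟨V, hV0, hVs, hV⟩ := two_sided p α q hp hα1 hα2 hαp hq1 hq2 hq3 X hmeas hH Y hYmeas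
    hdom hmom (ε / 4 ^ α) (by positivity)
  set w : ℝ := 2 ^ (α * p - 1) with hw
  set H : ℕ → ℝ≥0∞ := fun K => ENNReal.ofReal (4 * ((2 : ℝ) ^ K) ^ (α * p - 2) * V K) with hHdef
  have hfin : ∑' K : ℕ, ((K : ℝ≥0∞) + 1) * (2 ^ K * H K) ≠ ⊤ := by
    have h1 : ∀ K : ℕ, ((K : ℝ≥0∞) + 1) * (2 ^ K * H K) =
        ENNReal.ofReal (4 * (((K : ℝ) + 1) * w ^ K * V K)) := by
      intro K
      have e1 : (K : ℝ≥0∞) + 1 = ENNReal.ofReal ((K : ℝ) + 1) := by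
        rw [ENNReal.ofReal_add (by positivity) (by norm_num)]; simp
      have e2 : (2 : ℝ≥0∞) ^ K = ENNReal.ofReal (2 ^ K) := by
        rw [ENNReal.ofReal_pow (by norm_num)]; simp
      have e3 : w ^ K = 2 ^ K * ((2 : ℝ) ^ K) ^ (α * p - 2) := by
        rw [hw, ← Real.rpow_mul_natCast (by norm_num), ← Real.rpow_natCast_mul (by norm_num),
          ← Real.rpow_natCast, ← Real.rpow_add (by norm_num)]
        congr 1; ring
      rw [e1, e2, hHdef, ← ENNReal.ofReal_mul (by positivity),
        ← ENNReal.ofReal_mul (by positivity), e3]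
      congr 1; ring
    simp_rw [h1]
    rw [← ENNReal.ofReal_tsum_of_nonneg (fun K => ?_) (hVs.mul_left 4)]
    · exact ENNReal.ofReal_ne_top
    · have := hV0 K
      positivity
  have hle := tsum_dyadic_le (fun k : ℕ × ℕ =>
    ENNReal.ofReal ((((k.1 + 1) * (k.2 + 1) : ℕ) : ℝ) ^ (α * p - 2)) *
      volume {ω | ε * (((k.1 + 1) * (k.2 + 1) : ℕ) : ℝ) ^ α <
        maxDS (fun i j => X i j ω - ∫ ω', X i j ω') (k.1 + 1) (k.2 + 1)}) H ?_
  · refine (ENNReal.summable_toReal (ne_top_of_le_ne_top hfin hle)).congr fun k => ?_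
    rw [ENNReal.toReal_mul, ENNReal.toReal_ofReal (by positivity)]
  · rintro ⟨i, j⟩ m n hm hn hm' hn'
    dsimp only at hm hn hm' hn' ⊢
    set z : ℝ := (((i + 1) * (j + 1) : ℕ) : ℝ) with hz
    have hz0 : 0 < z := by rw [hz]; positivity
    have hz1 : z ≤ 2 ^ (m + n) := by
      have := Nat.mul_le_mul hm.le hn.le
      rw [hz, pow_add]; exact_mod_cast this
    have hz2 : (2 : ℝ) ^ (m + n) / 4 ≤ z := by
      have : 2 ^ m * 2 ^ n ≤ 4 * ((i + 1) * (j + 1)) :=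
        (Nat.mul_le_mul hm' hn').trans_eq (by ring)
      rw [div_le_iff₀ (by norm_num), mul_comm z, hz, pow_add]; exact_mod_cast this
    have hweight : z ^ (α * p - 2) ≤ 4 * ((2 : ℝ) ^ (m + n)) ^ (α * p - 2) := by
      have hpos : 0 ≤ ((2 : ℝ) ^ (m + n)) ^ (α * p - 2) := by positivity
      rcases le_total 0 (α * p - 2) with h | h
      · have := Real.rpow_le_rpow hz0.le hz1 h
        linarith
      · have h1 := Real.rpow_le_rpow_of_nonpos (by positivity) hz2 h
        rw [Real.div_rpow (by positivity) (by norm_num), div_eq_mul_inv,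
          ← Real.rpow_neg (by norm_num)] at h1
        have h2 : (4 : ℝ) ^ (-(α * p - 2)) ≤ 4 := by
          simpa using Real.rpow_le_rpow_of_exponent_le (by norm_num : (1 : ℝ) ≤ 4)
            (by linarith : -(α * p - 2) ≤ 1)
        nlinarith
    have hthr : ε / 4 ^ α * ((2 : ℝ) ^ α) ^ (m + n) ≤ ε * z ^ α := by
      have h1 := Real.rpow_le_rpow (by positivity) hz2 hα0.le
      rw [Real.div_rpow (by positivity) (by norm_num), ← Real.rpow_natCast_mul (by norm_num),
        mul_comm, Real.rpow_mul_natCast (by norm_num)] at h1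
      calc ε / 4 ^ α * ((2 : ℝ) ^ α) ^ (m + n) = ε * (((2 : ℝ) ^ α) ^ (m + n) / 4 ^ α) := by ring
        _ ≤ _ := by gcongr
    rw [hHdef]
    dsimp only
    rw [ENNReal.ofReal_mul (by positivity)]
    refine mul_le_mul' (ENNReal.ofReal_le_ofReal hweight) ((measure_mono ?_).trans (hV m n))
    intro ω hω
    obtain ⟨u, hu, v, hv, h⟩ := lt_maxDS (by positivity) hω
    exact ⟨u, hu.trans hm.le, v, hv.trans hn.le, hthr.trans_lt h⟩
end
end

section
/- Let p ≥ 1, 1/2 < α ≤ 1 with αp ≥ 1, and let {X_{m,n} : m ≥ 1, n ≥ 1} be a double array of random variables satisfying Condition (H_{2q}), where q = 1 if 1 ≤ p < 2 and q > (αp−1)/(2α−1) if p ≥ 2. Suppose all the X_{m,n} have the same distribution as a random variable X, and that for some μ ∈ ℝ and for every ε > 0, ∑_{m=1}^∞ ∑_{n=1}^∞ (mn)^{αp−2} P( max_{1≤u≤m, 1≤v≤n} |∑_{i=1}^{u} ∑_{j=1}^{v} (X_{i,j} − μ)| > ε (mn)^{α} ) < ∞. Then E X = μ and E(|X|^p log|X|)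 < ∞. -/
/-!
Since the maximal partial sums increase in both indices and the weights `(m n) ^ (α p - 2)` have
exponent at least `-1`, the double series may be condensed to dyadic rectangles `2 ^ a × 2 ^ b`
(`dyadic_summable`), with weights `2 ^ ((a + b) (α p - 1)) ≥ 1`. In particular the probabilities
`P(M > ε 2 ^ ((a + b) α))` tend to zero, where `M` is the maximum over the rectangle.

*Moments.* Each entry is a mixed difference of partial sums, so `M` controls `|X - μ| / 4` over the
whole rectangle. Condition (H) applied to indicators of half-lines bounds the `2q`-th moment of the
centred number of exceedances of a level. As there is no exceedance with probability at least `1/2`,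
this bounds the expected number of exceedances by a multiple of the probability that there is one
(`count_bound`, `tail_count_abs`). Hence `2 ^ ((a + b) α p) P(|Y| > c 2 ^ ((a + b) α))` is summable
over `(a, b)`; the `r + 1` pairs with `a + b = r` produce the logarithm (`integrable_of_tail`).

*Mean.* `Y` is now integrable. Condition (H) for truncations at a fixed level gives a weak law of
large numbers for the truncated sums, the remainder being small in `L¹`. Because `α ≤ 1`, the
hypothesis makes the averages of `X - μ` small in probability, which forces `E Y = μ` (`mean_eq`).
-/

open MeasureTheory ProbabilityTheory Finset Filter
open scoped NNReal ENNReal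

noncomputable section

/-! ### Counting exceedances -/

/-- A nonnegative `S` whose centred moment of order `2q` is at most `C (E S + (E S)^q)`, and which
vanishes with probability at least `1/2`, satisfies `E S ≤ T P(S ≠ 0)` with `T` depending only on
`C` and `q`. On `S = 0` the deviation equals `E S`, so the moment bound first makes `E S` bounded;
then the part of `E S` carried by large values of `S` is absorbed by the moment bound. -/
lemma count_bound (q C : ℝ) (hq : 1 ≤ q) (hC : 0 ≤ C) :
    ∃ T : ℝ, 0 < T ∧ ∀ {Ω : Type*} [MeasureSpace Ω] [IsProbabilityMeasure (volume : Measure Ω)]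
      (S : Ω → ℝ), Measurable S → (∀ ω, 0 ≤ S ω) → (∃ B, ∀ ω, S ω ≤ B) →
      (∫ ω, |S ω - ∫ ω', S ω'| ^ (2 * q)) ≤ C * ((∫ ω, S ω) + (∫ ω, S ω) ^ q) →
      (volume {ω | S ω ≠ 0}).toReal ≤ 1 / 2 →
      (∫ ω, S ω) ≤ T * (volume {ω | S ω ≠ 0}).toReal := by
  set K : ℝ := 1 + 4 * C with hK
  set T : ℝ := 8 * C * (1 + K) + 2 * K + 2 with hT
  have hKpos : 1 ≤ K := by linarith
  have hCK : 0 ≤ C * (1 + K) := by positivity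
  have hTpos : 2 ≤ T := by linarith
  refine ⟨2 * T, by linarith, ?_⟩
  intro Ω _ _ S hS hS0 ⟨B, hB⟩ hmom hhalf
  set a := ∫ ω, S ω with ha
  have ha0 : 0 ≤ a := integral_nonneg hS0
  have hSint : Integrable S := by
    refine Integrable.of_bound hS.aestronglyMeasurable B (ae_of_all _ fun ω => ?_)
    rw [Real.norm_eq_abs, abs_of_nonneg (hS0 ω)]; exact hB ω
  have hMint : Integrable fun ω => |S ω - a| ^ (2 * q) := by
    refine Integrable.of_bound (C := (|B| + a) ^ (2 * q))
      (Measurable.aestronglyMeasurable (by fun_prop)) (ae_of_all _ fun ω => ?_)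
    rw [Real.norm_eq_abs, abs_of_nonneg (by positivity)]
    refine Real.rpow_le_rpow (abs_nonneg _) ?_ (by linarith)
    have h1 := hS0 ω
    have h2 := hB ω
    have h3 := le_abs_self B
    rw [abs_le]; constructor <;> linarith
  have hms : MeasurableSet {ω | S ω ≠ 0} := hS (measurableSet_singleton 0).compl
  set P := (volume {ω | S ω ≠ 0}).toReal with hP
  have hind : ∫ ω, Set.indicator {ω | S ω ≠ 0} (fun _ => (1 : ℝ)) ω = P := by
    rw [integral_indicator_const _ hms]; simp [hP, Measure.real]
  have hindint : Integrable (Set.indicator {ω | S ω ≠ 0} (fun _ => (1 : ℝ))) :=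
    (integrable_const _).indicator hms
  have hM : a ^ (2 * q) * (1 - P) ≤ ∫ ω, |S ω - a| ^ (2 * q) := by
    have : ∫ ω, a ^ (2 * q) * (1 - Set.indicator {ω | S ω ≠ 0} (fun _ => (1 : ℝ)) ω)
        = a ^ (2 * q) * (1 - P) := by
      rw [integral_const_mul, integral_sub (integrable_const _) hindint, hind]; simp
    rw [← this]
    refine integral_mono (((integrable_const _).sub hindint).const_mul _) hMint fun ω => ?_
    by_cases h : S ω = 0
    · simp [h, abs_of_nonneg ha0]
    · simp [h]; positivity
  -- For `a ≥ 1`, `hM` and `hmom` give `a ^ (2 * q) / 2 ≤ 2 * C * a ^ q`, hence `a ^ q ≤ 4 * C`.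
  have haq : a + a ^ q ≤ (1 + K) * a := by
    rcases le_total a 1 with h | h
    · have : a ^ q ≤ a := by
        rcases ha0.eq_or_lt with h0 | h0
        · rw [← h0, Real.zero_rpow (by linarith)]
        · calc a ^ q ≤ a ^ (1 : ℝ) := Real.rpow_le_rpow_of_exponent_ge h0 h hq
            _ = a := Real.rpow_one a
      nlinarith
    · have h1 : a ≤ a ^ q := by
        calc a = a ^ (1 : ℝ) := (Real.rpow_one a).symm
          _ ≤ a ^ q := Real.rpow_le_rpow_of_exponent_le h hq
      have h2 : a ^ (2 * q) = a ^ q * a ^ q := by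
        rw [← Real.rpow_add (by linarith)]; ring_nf
      have h3 : a ^ q * a ^ q * (1 / 2) ≤ C * (2 * a ^ q) := by
        rw [← h2]
        calc a ^ (2 * q) * (1 / 2) ≤ a ^ (2 * q) * (1 - P) := by
              gcongr; linarith
          _ ≤ C * (a + a ^ q) := hM.trans hmom
          _ ≤ _ := by gcongr; linarith
      have h4 : a ^ q ≤ 4 * C := by
        have : 0 < a ^ q := by linarith
        nlinarith
      nlinarith
  have haK : a ≤ K := by
    by_contra hcon
    push Not at hcon
    have h1 : a ≤ a ^ q := by
      calc a = a ^ (1 : ℝ) := (Real.rpow_one a).symm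
        _ ≤ a ^ q := Real.rpow_le_rpow_of_exponent_le (by linarith) hq
    have h2 : a ^ (2 * q) = a ^ q * a ^ q := by
      rw [← Real.rpow_add (by linarith)]; ring_nf
    have h3 : a ^ q * a ^ q * (1 / 2) ≤ C * (2 * a ^ q) := by
      rw [← h2]
      calc a ^ (2 * q) * (1 / 2) ≤ a ^ (2 * q) * (1 - P) := by
            gcongr; linarith
        _ ≤ C * (a + a ^ q) := hM.trans hmom
        _ ≤ _ := by gcongr; linarith
    have : 0 < a ^ q := by linarith
    nlinarith
  -- If `S > T ≥ 2 * K ≥ 2 * a`, then `S ≤ 2 |S - a|` and `|S - a| ≥ T / 2 ≥ 1`.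
  have hpt : ∀ ω, S ω ≤ T * Set.indicator {ω | S ω ≠ 0} (fun _ => (1 : ℝ)) ω
      + 4 / T * |S ω - a| ^ (2 * q) := by
    intro ω
    have hnn : 0 ≤ 4 / T * |S ω - a| ^ (2 * q) := by positivity
    by_cases h : S ω = 0
    · simp [h]; simpa [h] using hnn
    · simp only [Set.mem_ofPred_eq, h, not_false_eq_true, Set.indicator_of_mem, ne_eq, mul_one]
      rcases le_total (S ω) T with h1 | h1
      · linarith
      · have h2 : S ω / 2 ≤ |S ω - a| := by
          refine le_trans ?_ (le_abs_self _); linarith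
        have h3 : |S ω - a| ^ 2 ≤ |S ω - a| ^ (2 * q) := by
          rw [← Real.rpow_natCast]
          refine Real.rpow_le_rpow_of_exponent_le (by linarith) ?_
          push_cast; linarith
        have h4 : S ω ≤ 4 / T * |S ω - a| ^ 2 := by
          rw [div_mul_eq_mul_div, le_div_iff₀ (by linarith)]
          nlinarith
        have h5 : 4 / T * |S ω - a| ^ 2 ≤ 4 / T * |S ω - a| ^ (2 * q) := by gcongr
        linarith
  have hfin : a ≤ T * P + 4 / T * ∫ ω, |S ω - a| ^ (2 * q) := by
    calc a ≤ ∫ ω, (T * Set.indicator {ω | S ω ≠ 0} (fun _ => (1 : ℝ)) ω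
          + 4 / T * |S ω - a| ^ (2 * q)) :=
          integral_mono hSint ((hindint.const_mul _).add (hMint.const_mul _)) hpt
      _ = _ := by
          rw [integral_add (hindint.const_mul _) (hMint.const_mul _), integral_const_mul,
            integral_const_mul, hind]
  have h6 : 4 / T * (∫ ω, |S ω - a| ^ (2 * q)) ≤ a / 2 := by
    calc 4 / T * (∫ ω, |S ω - a| ^ (2 * q)) ≤ 4 / T * (C * ((1 + K) * a)) := by
          gcongr; exact hmom.trans (by gcongr)
      _ ≤ a / 2 := by
          rw [div_mul_eq_mul_div, div_le_iff₀ (by linarith)]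
          nlinarith
  linarith

/-! ### Rectangles and maximal partial sums -/

/-- The rectangle `{1, …, m} × {1, …, n}` as a finite set of indices. -/
def rect (m n : ℕ) : Finset PIdx :=
  (Finset.Icc 1 m ×ˢ Finset.Icc 1 n).subtype fun k => 1 ≤ k.1 ∧ 1 ≤ k.2

lemma mem_rect {m n : ℕ} {k : PIdx} : k ∈ rect m n ↔ k.1.1 ≤ m ∧ k.1.2 ≤ n := by
  have := k.2
  simp only [rect, Finset.mem_subtype, Finset.mem_product, Finset.mem_Icc]
  tauto

lemma sum_rect (m n : ℕ) (g : ℕ → ℕ → ℝ) :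
    ∑ k ∈ rect m n, g k.1.1 k.1.2 = ∑ i ∈ Finset.Icc 1 m, ∑ j ∈ Finset.Icc 1 n, g i j := by
  rw [← Finset.sum_product', rect,
    Finset.sum_subtype_of_mem (fun k : ℕ × ℕ => g k.1 k.2)]
  intro k hk
  simp only [Finset.mem_product, Finset.mem_Icc] at hk
  exact ⟨hk.1.1, hk.2.1⟩

lemma card_rect (m n : ℕ) : ((rect m n).card : ℝ) = (m : ℝ) * n := by
  have := sum_rect m n fun _ _ => 1
  simpa using this

lemma rect_nonempty {m n : ℕ} (hm : 1 ≤ m) (hn : 1 ≤ n) : (rect m n).Nonempty :=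
  ⟨⟨(1, 1), le_rfl, le_rfl⟩, mem_rect.2 ⟨hm, hn⟩⟩

lemma maxDS_nonneg (f : ℕ → ℕ → ℝ) (m n : ℕ) : 0 ≤ maxDS f m n := NNReal.coe_nonneg _

lemma le_maxDS (f : ℕ → ℕ → ℝ) {m n u v : ℕ} (hu : u ≤ m) (hv : v ≤ n) :
    |∑ i ∈ Finset.Icc 1 u, ∑ j ∈ Finset.Icc 1 v, f i j| ≤ maxDS f m n := by
  rcases Nat.eq_zero_or_pos u with rfl | hu0
  · simpa using maxDS_nonneg f m n
  rcases Nat.eq_zero_or_pos v with rfl | hv0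
  · simpa using maxDS_nonneg f m n
  have h := Finset.le_sup (s := Finset.Icc 1 m ×ˢ Finset.Icc 1 n)
    (f := fun p : ℕ × ℕ => Real.toNNReal
      |∑ i ∈ Finset.Icc 1 p.1, ∑ j ∈ Finset.Icc 1 p.2, f i j|) (b := (u, v))
    (by simp only [Finset.mem_product, Finset.mem_Icc]; omega)
  have h' := NNReal.coe_le_coe.2 h
  rw [Real.coe_toNNReal _ (abs_nonneg _)] at h'
  exact h'

lemma maxDS_mono (f : ℕ → ℕ → ℝ) {m n m' n' : ℕ} (hm : m ≤ m') (hn : n ≤ n') :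
    maxDS f m n ≤ maxDS f m' n' := by
  refine NNReal.coe_le_coe.2 (Finset.sup_mono ?_)
  exact Finset.product_subset_product (Finset.Icc_subset_Icc le_rfl hm)
    (Finset.Icc_subset_Icc le_rfl hn)

/-- Each entry is a mixed second difference of four partial sums, each bounded by the maximum. -/
lemma abs_entry_le (f : ℕ → ℕ → ℝ) {m n i j : ℕ} (hi : 1 ≤ i) (him : i ≤ m) (hj : 1 ≤ j)
    (hjn : j ≤ n) : |f i j| ≤ 4 * maxDS f m n := by
  obtain ⟨i, rfl⟩ := Nat.exists_eq_add_of_le' hi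
  obtain ⟨j, rfl⟩ := Nat.exists_eq_add_of_le' hj
  have h1 := abs_le.1 (le_maxDS f him hjn)
  have h2 := abs_le.1 (le_maxDS f (show i ≤ m by omega) hjn)
  have h3 := abs_le.1 (le_maxDS f him (show j ≤ n by omega))
  have h4 := abs_le.1 (le_maxDS f (show i ≤ m by omega) (show j ≤ n by omega))
  simp only [Finset.sum_Icc_succ_top hi, Finset.sum_Icc_succ_top hj, Finset.sum_add_distrib] at *
  rw [abs_le]; constructor <;> linarith

/-! ### Consequences of the moment condition for tails -/

/-- For a monotone functional `s · 1_A` with `s = ±1`, the probability that some `X l` falls in `A`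
is comparable with the expected number of such `l`, once that probability is at most `1/2`. -/
lemma tail_count {Ω Λ : Type*} [MeasureSpace Ω] [IsProbabilityMeasure (volume : Measure Ω)]
    {q : ℝ} (hq : 1 ≤ q) {X : Λ → Ω → ℝ} (hX : ∀ l, Measurable (X l)) (hH : CondH q X)
    {Y : Ω → ℝ} (hid : ∀ l, IdentDistrib (X l) Y) :
    ∃ T : ℝ, 0 < T ∧ ∀ (s : ℝ) (A : Set ℝ), |s| = 1 → MeasurableSet A →
      Monotone (fun x => s * A.indicator (fun _ => (1 : ℝ)) x) →
      ∀ I : Finset Λ, I.Nonempty → (volume {ω | ∃ l ∈ I, X l ω ∈ A}).toReal ≤ 1 / 2 →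
      (I.card : ℝ) * (volume {ω | Y ω ∈ A}).toReal
        ≤ T * (volume {ω | ∃ l ∈ I, X l ω ∈ A}).toReal := by
  obtain ⟨C, hC⟩ := hH
  obtain ⟨T, hT, h⟩ := count_bound q |C| hq (abs_nonneg C)
  refine ⟨T, hT, fun s A hs hA hmono I hI hhalf => ?_⟩
  set g : ℝ → ℝ := A.indicator fun _ => (1 : ℝ) with hg
  have hgm : Measurable g := measurable_const.indicator hA
  have hg0 : ∀ x, 0 ≤ g x := fun x => Set.indicator_nonneg (fun _ _ => zero_le_one) x
  have hg1 : ∀ x, g x ≤ 1 := fun x => Set.indicator_le_self' (fun _ _ => zero_le_one) x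
  have hgz : ∀ x, g x ≠ 0 ↔ x ∈ A := fun x => by simp [hg]
  have hgr : ∀ x (r : ℝ), r ≠ 0 → g x ^ r = g x := fun x r hr => by
    by_cases hx : x ∈ A <;> simp [hg, hx, Real.zero_rpow hr]
  have hg2 : ∀ x, g x ^ 2 = g x := fun x => by
    by_cases hx : x ∈ A <;> simp [hg, hx]
  have hs2 : s ^ 2 = 1 := by rw [← sq_abs, hs, one_pow]
  set P := (volume {ω | Y ω ∈ A}).toReal with hP
  have hP0 : 0 ≤ P := ENNReal.toReal_nonneg
  have hgi : ∀ l, Integrable fun ω => g (X l ω) := fun l =>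
    Integrable.of_bound (hgm.comp (hX l)).aestronglyMeasurable 1 (ae_of_all _ fun ω => by
      rw [Real.norm_eq_abs, abs_of_nonneg (hg0 _)]; exact hg1 _)
  have hgE : ∀ l, ∫ ω, g (X l ω) = P := fun l => by
    have h1 : (fun ω => g (X l ω)) = (X l ⁻¹' A).indicator fun _ => (1 : ℝ) := rfl
    rw [h1, integral_indicator_const _ (hX l hA)]
    simp only [Measure.real, smul_eq_mul, mul_one, hP]
    exact congrArg _ ((hid l).measure_mem_eq hA)
  set S : Ω → ℝ := fun ω => ∑ l ∈ I, g (X l ω) with hS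
  have hSE : ∫ ω, S ω = I.card * P := by
    rw [hS, integral_finsetSum _ fun l _ => hgi l]
    simp [hgE]
  have hSset : {ω | S ω ≠ 0} = {ω | ∃ l ∈ I, X l ω ∈ A} := by
    ext ω
    simp only [Set.mem_ofPred_eq, hS, ne_eq]
    rw [Finset.sum_eq_zero_iff_of_nonneg fun l _ => hg0 _]
    push Not
    simp only [hgz]
  have hSm : Measurable S := Finset.measurable_sum _ fun l _ => hgm.comp (hX l)
  have hS0 : ∀ ω, 0 ≤ S ω := fun ω => Finset.sum_nonneg fun l _ => hg0 _
  have hSB : ∀ ω, S ω ≤ I.card := fun ω => by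
    calc S ω ≤ ∑ l ∈ I, (1 : ℝ) := Finset.sum_le_sum fun l _ => hg1 _
      _ = I.card := by simp
  have key := h S hSm hS0 ⟨_, hSB⟩ ?_ (by rw [hSset]; exact hhalf)
  · rwa [hSE, hSset] at key
  -- Condition (H) for `f_l = s · 1_A`: every `|f_l|` is an indicator, so all its moments are `P`.
  have hsum : ∀ ω, |∑ l ∈ I, (s * g (X l ω) - ∫ ω', s * g (X l ω'))| = |S ω - I.card * P| := by
    intro ω
    have : ∑ l ∈ I, (s * g (X l ω) - ∫ ω', s * g (X l ω')) = s * (S ω - I.card * P) := by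
      simp only [integral_const_mul, hgE, hS, Finset.sum_sub_distrib, Finset.mul_sum, mul_sub]
      simp; ring
    rw [this, abs_mul, hs, one_mul]
  have habs : ∀ l ω, |s * g (X l ω)| ^ (2 * q) = g (X l ω) := fun l ω => by
    rw [abs_mul, hs, one_mul, abs_of_nonneg (hg0 _), hgr _ _ (by linarith)]
  have hsq : ∀ l ω, (s * g (X l ω)) ^ 2 = g (X l ω) := fun l ω => by
    rw [mul_pow, hs2, one_mul, hg2]
  have hm := hC I hI (fun _ x => s * g x) (fun _ _ => hmono)
    (fun l _ => (hgi l).const_mul s) (fun l _ => by simpa only [hsq] using hgi l)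
    (fun l _ => by simpa only [habs] using hgi l) (by
      simp only [hsum]
      refine Integrable.of_bound (C := (I.card + I.card * P) ^ (2 * q))
        (Measurable.aestronglyMeasurable (by fun_prop)) (ae_of_all _ fun ω => ?_)
      rw [Real.norm_eq_abs, abs_of_nonneg (by positivity)]
      refine Real.rpow_le_rpow (abs_nonneg _) ?_ (by linarith)
      have h1 := hS0 ω
      have h2 := hSB ω
      have h3 : 0 ≤ I.card * P := by positivity
      rw [abs_le]; constructor <;> linarith)
  simp only [hsum, habs, hsq, hgE, Finset.sup'_const] at hm
  rw [hSE, Real.mul_rpow (by positivity) hP0]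
  refine hm.trans ?_
  gcongr
  exact le_abs_self C

/-- The two-sided version: the upper tail is handled by `1_{x > c + t}` and the lower tail by
`-1_{x < c - t}`, both nondecreasing. -/
lemma tail_count_abs {Ω Λ : Type*} [MeasureSpace Ω] [IsProbabilityMeasure (volume : Measure Ω)]
    {q : ℝ} (hq : 1 ≤ q) {X : Λ → Ω → ℝ} (hX : ∀ l, Measurable (X l)) (hH : CondH q X)
    {Y : Ω → ℝ} (hid : ∀ l, IdentDistrib (X l) Y) (c : ℝ) :
    ∃ T : ℝ, 0 < T ∧ ∀ (t : ℝ) (I : Finset Λ), I.Nonempty →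
      (volume {ω | ∃ l ∈ I, t < |X l ω - c|}).toReal ≤ 1 / 2 →
      (I.card : ℝ) * (volume {ω | t < |Y ω - c|}).toReal
        ≤ T * (volume {ω | ∃ l ∈ I, t < |X l ω - c|}).toReal := by
  obtain ⟨T, hT, h⟩ := tail_count hq hX hH hid
  refine ⟨2 * T, by linarith, fun t I hI hhalf => ?_⟩
  set Q := (volume {ω | ∃ l ∈ I, t < |X l ω - c|}).toReal with hQ
  have hsub : ∀ A : Set ℝ, (∀ x ∈ A, t < |x - c|) →
      (volume {ω | ∃ l ∈ I, X l ω ∈ A}).toReal ≤ Q := fun A hA =>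
    measureReal_mono (μ := volume) fun ω ⟨l, hl, hx⟩ => ⟨l, hl, hA _ hx⟩
  have hU : ∀ x ∈ Set.Ioi (c + t), t < |x - c| := fun x hx => by
    have : c + t < x := hx
    exact lt_of_lt_of_le (by linarith) (le_abs_self _)
  have hL : ∀ x ∈ Set.Iio (c - t), t < |x - c| := fun x hx => by
    have : x < c - t := hx
    exact lt_of_lt_of_le (by linarith) (neg_le_abs _)
  have h1 := h 1 (Set.Ioi (c + t)) (by simp) measurableSet_Ioi (by
    intro x y hxy
    simp only [one_mul, Set.indicator, Set.mem_Ioi]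
    split_ifs <;> linarith) I hI ((hsub _ hU).trans hhalf)
  have h2 := h (-1) (Set.Iio (c - t)) (by simp) measurableSet_Iio (by
    intro x y hxy
    simp only [Set.indicator, Set.mem_Iio]
    split_ifs <;> linarith) I hI ((hsub _ hL).trans hhalf)
  have h3 : (volume {ω | t < |Y ω - c|}).toReal ≤
      (volume {ω | Y ω ∈ Set.Ioi (c + t)}).toReal + (volume {ω | Y ω ∈ Set.Iio (c - t)}).toReal := by
    refine (measureReal_mono (μ := volume) ?_).trans (measureReal_union_le _ _)
    intro ω hω
    rcases lt_abs.1 (show t < |Y ω - c| from hω) with h | h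
    · left; show c + t < Y ω; linarith
    · right; show Y ω < c - t; linarith
  have h4 := mul_le_mul_of_nonneg_left (hsub _ hU) hT.le
  have h5 := mul_le_mul_of_nonneg_left (hsub _ hL) hT.le
  calc (I.card : ℝ) * (volume {ω | t < |Y ω - c|}).toReal
      ≤ I.card * (_ + _) := mul_le_mul_of_nonneg_left h3 (by positivity)
    _ ≤ 2 * T * Q := by rw [mul_add]; linarith

/-! ### Dyadic condensation -/

/-- Condensation of a weighted double series along dyadic blocks. For `s ≥ -1` the weight
`(m n) ^ s` is at least a quarter of its value at the lower corner `(2 ^ a, 2 ^ b)` throughout the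
block, and the block has `2 ^ (a + b)` points, which raises the exponent to `s + 1`. -/
lemma dyadic_summable (s : ℝ) (hs : -1 ≤ s) (F : ℕ → ℕ → ℝ) (hF : ∀ m n, 0 ≤ F m n)
    (G : ℕ → ℕ → ℝ) (hG : ∀ a b, 0 ≤ G a b)
    (hGF : ∀ a b m n, 2 ^ a ≤ m → m < 2 ^ (a + 1) → 2 ^ b ≤ n → n < 2 ^ (b + 1) → G a b ≤ F m n)
    (h : Summable fun k : ℕ × ℕ =>
      (((k.1 + 1) * (k.2 + 1) : ℕ) : ℝ) ^ s * F (k.1 + 1) (k.2 + 1)) :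
    Summable fun k : ℕ × ℕ => ((2 : ℝ) ^ (k.1 + k.2)) ^ (s + 1) * G k.1 k.2 := by
  set g : ℕ × ℕ → ℝ := fun k => (((k.1 + 1) * (k.2 + 1) : ℕ) : ℝ) ^ s * F (k.1 + 1) (k.2 + 1) with hg
  have hg0 : ∀ k, 0 ≤ g k := fun k => mul_nonneg (by positivity) (hF _ _)
  -- `blk a` consists of the `i` with `2 ^ a ≤ i + 1 < 2 ^ (a + 1)`
  let blk : ℕ → Finset ℕ := fun a => Finset.Ico (2 ^ a - 1) (2 ^ (a + 1) - 1)
  have hblk : ∀ a i, i ∈ blk a ↔ 2 ^ a ≤ i + 1 ∧ i + 1 < 2 ^ (a + 1) := fun a i => by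
    have h1 : 1 ≤ 2 ^ a := Nat.one_le_two_pow
    have h2 : 1 ≤ 2 ^ (a + 1) := Nat.one_le_two_pow
    simp only [blk, Finset.mem_Ico]; omega
  have hlog : ∀ a i, i ∈ blk a → Nat.log 2 (i + 1) = a := fun a i hi =>
    Nat.log_eq_of_pow_le_of_lt_pow ((hblk a i).1 hi).1 ((hblk a i).1 hi).2
  have hcard : ∀ a, (blk a).card = 2 ^ a := fun a => by
    simp only [blk, Nat.card_Ico, pow_succ]; omega
  let B : ℕ × ℕ → Finset (ℕ × ℕ) := fun k => blk k.1 ×ˢ blk k.2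
  have hbound : ∀ k, 1 / 4 * (((2 : ℝ) ^ (k.1 + k.2)) ^ (s + 1) * G k.1 k.2) ≤ ∑ i ∈ B k, g i := by
    rintro ⟨a, b⟩
    have hN : (0 : ℝ) < 2 ^ (a + b) := by positivity
    have h1 : ∀ i ∈ B (a, b), 1 / 4 * (((2 : ℝ) ^ (a + b)) ^ s * G a b) ≤ g i := by
      rintro ⟨i, j⟩ hij
      simp only [B, Finset.mem_product] at hij
      obtain ⟨hi1, hi2⟩ := (hblk a i).1 hij.1
      obtain ⟨hj1, hj2⟩ := (hblk b j).1 hij.2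
      set x : ℝ := (((i + 1) * (j + 1) : ℕ) : ℝ) with hx
      have hxl : (2 : ℝ) ^ (a + b) ≤ x := by
        rw [hx, pow_add]; exact_mod_cast Nat.mul_le_mul hi1 hj1
      have hxu : x ≤ 4 * 2 ^ (a + b) := by
        have : ((i + 1) * (j + 1) : ℕ) ≤ 2 ^ (a + 1) * 2 ^ (b + 1) := Nat.mul_le_mul hi2.le hj2.le
        have h' : x ≤ 2 ^ (a + 1) * 2 ^ (b + 1) := by rw [hx]; exact_mod_cast this
        refine h'.trans (le_of_eq ?_); ring
      have hx0 : 0 < x := hN.trans_le hxl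
      have hw : 1 / 4 * ((2 : ℝ) ^ (a + b)) ^ s ≤ x ^ s := by
        have e1 : ((2 : ℝ) ^ (a + b)) ^ s = ((2 : ℝ) ^ (a + b)) ^ (s + 1) / 2 ^ (a + b) := by
          rw [Real.rpow_add_one hN.ne', mul_div_cancel_right₀ _ hN.ne']
        have e2 : x ^ s = x ^ (s + 1) / x := by
          rw [Real.rpow_add_one hx0.ne', mul_div_cancel_right₀ _ hx0.ne']
        rw [e1, e2, le_div_iff₀ hx0]
        calc 1 / 4 * (((2 : ℝ) ^ (a + b)) ^ (s + 1) / 2 ^ (a + b)) * x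
            ≤ 1 / 4 * (((2 : ℝ) ^ (a + b)) ^ (s + 1) / 2 ^ (a + b)) * (4 * 2 ^ (a + b)) := by
              gcongr
          _ = ((2 : ℝ) ^ (a + b)) ^ (s + 1) := by field_simp
          _ ≤ x ^ (s + 1) := by
              refine Real.rpow_le_rpow hN.le hxl (by linarith)
      calc 1 / 4 * (((2 : ℝ) ^ (a + b)) ^ s * G a b)
          = (1 / 4 * ((2 : ℝ) ^ (a + b)) ^ s) * G a b := by ring
        _ ≤ x ^ s * F (i + 1) (j + 1) := by
            gcongr
            · exact hG _ _
            · exact hGF a b _ _ hi1 hi2 hj1 hj2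
    have h2 := Finset.card_nsmul_le_sum (B (a, b)) g _ h1
    refine le_trans (le_of_eq ?_) h2
    simp only [B, Finset.card_product, hcard, nsmul_eq_mul]
    rw [Real.rpow_add_one hN.ne']
    push_cast
    ring
  have hdisj : ∀ k k', k ≠ k' → Disjoint (B k) (B k') := by
    intro k k' hne
    rw [Finset.disjoint_left]
    rintro ⟨i, j⟩ h1 h2
    simp only [B, Finset.mem_product] at h1 h2
    apply hne
    ext
    · rw [← hlog _ _ h1.1, ← hlog _ _ h2.1]
    · rw [← hlog _ _ h1.2, ← hlog _ _ h2.2]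
  have hsumm : Summable fun k : ℕ × ℕ =>
      1 / 4 * (((2 : ℝ) ^ (k.1 + k.2)) ^ (s + 1) * G k.1 k.2) := by
    refine summable_of_sum_le (c := ∑' k, g k)
      (fun k => mul_nonneg (by norm_num) (mul_nonneg (by positivity) (hG _ _))) fun u => ?_
    calc ∑ k ∈ u, 1 / 4 * (((2 : ℝ) ^ (k.1 + k.2)) ^ (s + 1) * G k.1 k.2)
        ≤ ∑ k ∈ u, ∑ i ∈ B k, g i := Finset.sum_le_sum fun k _ => hbound k
      _ = ∑ i ∈ u.biUnion B, g i :=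
          (Finset.sum_biUnion fun k _ k' _ hne => hdisj k k' hne).symm
      _ ≤ ∑' k, g k := h.sum_le_tsum _ fun k _ => hg0 k
  simpa using hsumm.mul_left 4

/-! ### Moments from tails -/

lemma rlog_nonneg (x : ℝ) : 0 ≤ rlog x :=
  Real.log_nonneg (le_trans (by norm_num) (le_max_right x 2))

lemma rlog_mono {x y : ℝ} (h : x ≤ y) : rlog x ≤ rlog y :=
  Real.log_le_log (lt_of_lt_of_le (by norm_num) (le_max_right x 2)) (max_le_max_right 2 h)

lemma half_le_rlog (x : ℝ) : 1 / 2 ≤ rlog x := by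
  have h1 : Real.log 2 ≤ rlog x := Real.log_le_log (by norm_num) (le_max_right x 2)
  have h2 := Real.log_two_gt_d9
  linarith

lemma measurable_rlog : Measurable rlog :=
  Real.measurable_log.comp (measurable_id.max measurable_const)

/-- Either `w` is small, or `w` lies just above a level `c 2^{rα}` for which the number `r + 1` of
pairs `(a, b)` with `a + b = r` accounts for the logarithm. -/
lemma level_bound (p α c : ℝ) (hp : 0 < p) (hα : 0 < α) (hc : 1 ≤ c) :
    ∃ C0 C1 : ℝ, 0 ≤ C0 ∧ 0 ≤ C1 ∧ ∀ w : ℝ, 0 ≤ w → w ^ p * rlog w ≤ C0 ∨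
      ∃ r : ℕ, c * ((2 : ℝ) ^ r) ^ α < w ∧
        w ^ p * rlog w ≤ C1 * (((r : ℝ) + 1) * ((2 : ℝ) ^ r) ^ (α * p)) := by
  have hlc : 0 ≤ Real.log (2 * c) := Real.log_nonneg (by linarith)
  refine ⟨c ^ p * rlog c, c ^ p * 2 ^ (α * p) * (Real.log (2 * c) + α),
    mul_nonneg (by positivity) (rlog_nonneg c), by positivity, fun w hw => ?_⟩
  rcases le_or_gt w c with hwc | hwc
  · left
    exact mul_le_mul (Real.rpow_le_rpow hw hwc hp.le) (rlog_mono hwc) (rlog_nonneg _)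
      (by positivity)
  right
  have hex : ∃ r : ℕ, w ≤ c * ((2 : ℝ) ^ r) ^ α := by
    obtain ⟨r, hr⟩ := pow_unbounded_of_one_lt w (Real.one_lt_rpow (by norm_num : (1 : ℝ) < 2) hα)
    refine ⟨r, hr.le.trans ?_⟩
    have : ((2 : ℝ) ^ α) ^ r = ((2 : ℝ) ^ r) ^ α := by
      rw [← Real.rpow_natCast, ← Real.rpow_natCast, ← Real.rpow_mul (by norm_num),
        ← Real.rpow_mul (by norm_num), mul_comm]
    rw [this]
    exact le_mul_of_one_le_left (by positivity) hc
  obtain ⟨r, hr1, hr2⟩ : ∃ r : ℕ, c * ((2 : ℝ) ^ r) ^ α < w ∧ w ≤ c * ((2 : ℝ) ^ (r + 1)) ^ α := by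
    classical
    have h0 : Nat.find hex ≠ 0 := by
      intro h0
      have := Nat.find_spec hex
      rw [h0] at this
      simp at this
      linarith
    obtain ⟨r, hr⟩ := Nat.exists_eq_succ_of_ne_zero h0
    refine ⟨r, ?_, ?_⟩
    · have := Nat.find_min hex (m := r) (by omega)
      push Not at this
      exact this
    · have := Nat.find_spec hex
      rwa [hr] at this
  refine ⟨r, hr1, ?_⟩
  have h2r : (1 : ℝ) ≤ ((2 : ℝ) ^ (r + 1)) ^ α :=
    Real.one_le_rpow (one_le_pow₀ (by norm_num)) hα.le
  have hlog : rlog w ≤ (Real.log (2 * c) + α) * (r + 1) := by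
    have h1 : rlog w ≤ Real.log (2 * c * ((2 : ℝ) ^ (r + 1)) ^ α) := by
      refine Real.log_le_log (lt_of_lt_of_le (by norm_num) (le_max_right w 2)) (max_le ?_ ?_)
      · nlinarith
      · nlinarith
    rw [Real.log_mul (by positivity) (by positivity), Real.log_rpow (by positivity),
      Real.log_pow] at h1
    push_cast at h1
    have h3 : Real.log 2 ≤ 1 := by have := Real.log_two_lt_d9; linarith
    have h4 : α * (((r : ℝ) + 1) * Real.log 2) ≤ α * (((r : ℝ) + 1) * 1) := by gcongr
    have h5 : 0 ≤ Real.log (2 * c) * r := by positivity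
    nlinarith
  have hwp : w ^ p ≤ c ^ p * 2 ^ (α * p) * ((2 : ℝ) ^ r) ^ (α * p) := by
    calc w ^ p ≤ (c * ((2 : ℝ) ^ (r + 1)) ^ α) ^ p := Real.rpow_le_rpow hw hr2 hp.le
      _ = _ := by
        rw [Real.mul_rpow (by linarith) (by positivity), ← Real.rpow_mul (by positivity), pow_succ,
          Real.mul_rpow (by positivity) (by positivity)]
        ring
  calc w ^ p * rlog w ≤ (c ^ p * 2 ^ (α * p) * ((2 : ℝ) ^ r) ^ (α * p)) *
        ((Real.log (2 * c) + α) * (r + 1)) :=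
        mul_le_mul hwp hlog (rlog_nonneg _) (by positivity)
    _ = _ := by ring

/-- By `level_bound`, `|Y|^p log |Y|` is at most a constant plus a multiple of the sum over all
`(a, b)` of `2^{(a+b)αp} 1(|Y| > c 2^{(a+b)α})`; integrate term by term. -/
lemma integrable_of_tail {Ω : Type*} [MeasureSpace Ω] [IsProbabilityMeasure (volume : Measure Ω)]
    (p α c : ℝ) (hp : 0 < p) (hα : 0 < α) (hc : 1 ≤ c) {Y : Ω → ℝ} (hY : Measurable Y)
    (h : Summable fun k : ℕ × ℕ => ((2 : ℝ) ^ (k.1 + k.2)) ^ (α * p) *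
      (volume {ω | c * ((2 : ℝ) ^ (k.1 + k.2)) ^ α < |Y ω|}).toReal) :
    Integrable fun ω => |Y ω| ^ p * rlog |Y ω| := by
  obtain ⟨C0, C1, hC0, hC1, hb⟩ := level_bound p α c hp hα hc
  have hYm : Measurable fun ω => |Y ω| := by fun_prop
  have hm : Measurable fun ω => |Y ω| ^ p * rlog |Y ω| :=
    (hYm.pow_const p).mul (measurable_rlog.comp hYm)
  have hnn : ∀ ω, 0 ≤ |Y ω| ^ p * rlog |Y ω| := fun ω =>
    mul_nonneg (by positivity) (rlog_nonneg _)
  refine ⟨hm.aestronglyMeasurable, ?_⟩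
  rw [hasFiniteIntegral_iff_ofReal (ae_of_all _ hnn)]
  let D : ℕ × ℕ → Set Ω := fun k => {ω | c * ((2 : ℝ) ^ (k.1 + k.2)) ^ α < |Y ω|}
  have hD : ∀ k, MeasurableSet (D k) := fun k => measurableSet_lt measurable_const hYm
  let W : ℕ × ℕ → ℝ := fun k => ((2 : ℝ) ^ (k.1 + k.2)) ^ (α * p)
  have hW : ∀ k, 0 ≤ W k := fun k => by positivity
  have hpt : ∀ ω, ENNReal.ofReal (|Y ω| ^ p * rlog |Y ω|) ≤ ENNReal.ofReal C0 +
      ENNReal.ofReal C1 * ∑' k, (D k).indicator (fun _ => ENNReal.ofReal (W k)) ω := by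
    intro ω
    rcases hb _ (abs_nonneg (Y ω)) with h0 | ⟨r, hr, h1⟩
    · exact (ENNReal.ofReal_le_ofReal h0).trans le_self_add
    · refine le_trans ?_ le_add_self
      refine (ENNReal.ofReal_le_ofReal h1).trans ?_
      rw [ENNReal.ofReal_mul hC1]
      gcongr
      refine le_trans (le_of_eq ?_) (ENNReal.sum_le_tsum (Finset.HasAntidiagonal.antidiagonal r))
      have : ∀ k ∈ Finset.HasAntidiagonal.antidiagonal r, (D k).indicator (fun _ => ENNReal.ofReal (W k)) ω
          = ENNReal.ofReal (((2 : ℝ) ^ r) ^ (α * p)) := by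
        intro k hk
        have hk' : k.1 + k.2 = r := Finset.HasAntidiagonal.mem_antidiagonal.1 hk
        have : ω ∈ D k := by
          show c * ((2 : ℝ) ^ (k.1 + k.2)) ^ α < |Y ω|
          rwa [hk']
        rw [Set.indicator_of_mem this]
        simp only [W, hk']
      rw [Finset.sum_congr rfl this, Finset.sum_const, Finset.Nat.card_antidiagonal, nsmul_eq_mul,
        ENNReal.ofReal_mul (by positivity)]
      congr 1
      rw [← ENNReal.ofReal_natCast]
      push_cast
      rfl
  refine (lintegral_mono hpt).trans_lt ?_
  have hmi : ∀ k, Measurable ((D k).indicator (fun _ => ENNReal.ofReal (W k))) := fun k =>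
    measurable_const.indicator (hD k)
  rw [lintegral_add_left measurable_const, lintegral_const_mul _ (Measurable.tsum hmi),
    lintegral_tsum fun k => (hmi k).aemeasurable]
  have hterm : ∀ k, ∫⁻ ω, (D k).indicator (fun _ => ENNReal.ofReal (W k)) ω
      = ENNReal.ofReal (W k * (volume (D k)).toReal) := fun k => by
    rw [lintegral_indicator_const (hD k), ENNReal.ofReal_mul (hW k),
      ENNReal.ofReal_toReal (measure_ne_top _ _)]
  simp only [hterm]
  refine ENNReal.add_lt_top.2 ⟨?_, ENNReal.mul_lt_top ENNReal.ofReal_lt_top ?_⟩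
  · simp
  · exact (Summable.tsum_ofReal_ne_top h).lt_top

/-! ### Identification of the mean -/

set_option maxHeartbeats 1000000 in
/-- Identification of the centring constant: truncate at a fixed level, apply the moment inequality
to the truncated sums, and control the remainder in `L¹`. -/
lemma mean_eq {Ω Λ : Type*} [MeasureSpace Ω] [IsProbabilityMeasure (volume : Measure Ω)]
    {q : ℝ} (hq : 1 ≤ q) {X : Λ → Ω → ℝ} (hX : ∀ l, Measurable (X l)) (hH : CondH q X)
    {Y : Ω → ℝ} (hYm : Measurable Y) (hid : ∀ l, IdentDistrib (X l) Y) (hY : Integrable Y) (c : ℝ)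
    (I : ℕ → Finset Λ) (hI : ∀ n, (I n).Nonempty)
    (hIt : Tendsto (fun n => ((I n).card : ℝ)) atTop atTop)
    (h : ∀ η : ℝ, 0 < η → ∀ᶠ n in atTop,
      (volume {ω | η * ((I n).card : ℝ) < |∑ l ∈ I n, (X l ω - c)|}).toReal ≤ 1 / 4) :
    ∫ ω, Y ω = c := by
  by_contra hne
  obtain ⟨C, hC⟩ := hH
  set η : ℝ := |(∫ ω, Y ω) - c| with hη
  have hηpos : 0 < η := abs_pos.2 (sub_ne_zero.2 hne)
  let g : ℕ → ℝ → ℝ := fun b x => max (-(b : ℝ)) (min (x - c) b)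
  have hgm : ∀ b, Measurable (g b) := fun b => by fun_prop
  have hgmono : ∀ b, Monotone (g b) := fun b x y hxy =>
    max_le_max_left _ (min_le_min_right _ (by linarith))
  have hgb : ∀ b x, |g b x| ≤ b := fun b x => by
    have hb : (0 : ℝ) ≤ b := b.cast_nonneg
    exact abs_le.2 ⟨le_max_left _ _, max_le (by linarith) (min_le_right _ _)⟩
  have hgx : ∀ b x, |g b x| ≤ |x - c| := fun b x => by
    have hb : (0 : ℝ) ≤ b := b.cast_nonneg
    rcases le_total (x - c) b with h1 | h1 <;> rcases le_total (-(b : ℝ)) (x - c) with h2 | h2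
    · simp only [g, min_eq_left h1, max_eq_right h2]; exact le_rfl
    · simp only [g, min_eq_left h1, max_eq_left h2, abs_neg, abs_of_nonneg hb]
      exact (by linarith : (b : ℝ) ≤ -(x - c)).trans (neg_le_abs _)
    · simp only [g, min_eq_right h1, max_eq_right (by linarith : -(b : ℝ) ≤ b), abs_of_nonneg hb]
      exact h1.trans (le_abs_self _)
    · simp only [g, min_eq_right h1, max_eq_right (by linarith : -(b : ℝ) ≤ b), abs_of_nonneg hb]
      exact h1.trans (le_abs_self _)
  have hgeq : ∀ (b : ℕ) (x : ℝ), |x - c| ≤ b → g b x = x - c := fun b x hx => by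
    obtain ⟨h1, h2⟩ := abs_le.1 hx
    simp only [g, min_eq_left h2, max_eq_right h1]
  have hYc : Integrable fun ω => Y ω - c := hY.sub (integrable_const c)
  -- Dominated convergence with dominating function `2 |Y - c|`.
  have hδ : Tendsto (fun b : ℕ => ∫ ω, |Y ω - c - g b (Y ω)|) atTop (nhds 0) := by
    have : Tendsto (fun b : ℕ => ∫ ω, |Y ω - c - g b (Y ω)|) atTop (nhds (∫ _ : Ω, (0 : ℝ))) := by
      refine tendsto_integral_of_dominated_convergence (fun ω => 2 * |Y ω - c|)
        (fun b => ?_) (hYc.abs.const_mul 2) (fun b => ae_of_all _ fun ω => ?_)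
        (ae_of_all _ fun ω => ?_)
      · have := (hgm b).comp hYm
        exact (((hYm.sub_const c).sub this).abs).aestronglyMeasurable
      · rw [Real.norm_eq_abs, abs_abs]
        have h1 := abs_sub (Y ω - c) (g b (Y ω))
        have h2 := hgx b (Y ω)
        linarith
      · refine tendsto_const_nhds.congr' ?_
        filter_upwards [eventually_ge_atTop (Nat.ceil |Y ω - c|)] with b hb
        rw [hgeq b _ (Nat.ceil_le.1 hb)]; simp
    simpa using this
  obtain ⟨b, hb⟩ := (hδ.eventually (gt_mem_nhds (show (0 : ℝ) < η / 16 by positivity))).exists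
  set δ := ∫ ω, |Y ω - c - g b (Y ω)| with hδdef
  have hgY : Integrable fun ω => g b (Y ω) :=
    Integrable.of_bound ((hgm b).comp hYm).aestronglyMeasurable b
      (ae_of_all _ fun ω => by rw [Real.norm_eq_abs]; exact hgb b _)
  have hgX : ∀ l, Integrable fun ω => g b (X l ω) := fun l =>
    Integrable.of_bound ((hgm b).comp (hX l)).aestronglyMeasurable b
      (ae_of_all _ fun ω => by rw [Real.norm_eq_abs]; exact hgb b _)
  set e := ∫ ω, g b (Y ω) with he
  have hE : ∀ l, ∫ ω, g b (X l ω) = e := fun l => ((hid l).comp (hgm b)).integral_eq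
  have hRm : Measurable fun x => |x - c - g b x| :=
    ((measurable_id.sub_const c).sub (hgm b)).abs
  have hRE : ∀ l, ∫ ω, |X l ω - c - g b (X l ω)| = δ := fun l => ((hid l).comp hRm).integral_eq
  have hRint : ∀ l, Integrable fun ω => |X l ω - c - g b (X l ω)| := fun l =>
    ((hid l).comp hRm).integrable_iff.2 (hYc.sub hgY).abs
  have he_lb : η - η / 16 ≤ |e| := by
    have h1 : (∫ ω, Y ω) - c - e = ∫ ω, (Y ω - c - g b (Y ω)) := by
      rw [integral_sub hYc hgY, integral_sub hY (integrable_const c)]; simp [he]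
    have h2 : |(∫ ω, Y ω) - c - e| ≤ δ := by rw [h1]; exact abs_integral_le_integral_abs
    have h3 := abs_sub_abs_le_abs_sub ((∫ ω, Y ω) - c) e
    linarith
  -- By `1 ≤ q`, both terms in Condition (H) are `O(N ^ q)`, while the scale is `N ^ (2 * q)`.
  set b' : ℝ := (b : ℝ) ^ (2 * q) + ((b : ℝ) ^ 2) ^ q with hb'
  have hV : ∀ n, Integrable (fun ω => |∑ l ∈ I n, (g b (X l ω) - e)| ^ (2 * q)) ∧
      ∫ ω, |∑ l ∈ I n, (g b (X l ω) - e)| ^ (2 * q) ≤ |C| * (((I n).card : ℝ) ^ q * b') := by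
    intro n
    have hN1 : (1 : ℝ) ≤ (I n).card := by exact_mod_cast (hI n).card_pos
    have hVi : Integrable (fun ω => |∑ l ∈ I n, (g b (X l ω) - e)| ^ (2 * q)) := by
      have hmeas : Measurable fun ω => |∑ l ∈ I n, (g b (X l ω) - e)| ^ (2 * q) :=
        ((Finset.measurable_sum _ fun l _ =>
          ((hgm b).comp (hX l)).sub_const e).abs).pow_const _
      refine Integrable.of_bound (C := ((I n).card * (b + |e|)) ^ (2 * q))
        hmeas.aestronglyMeasurable (ae_of_all _ fun ω => ?_)
      rw [Real.norm_eq_abs, abs_of_nonneg (by positivity)]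
      refine Real.rpow_le_rpow (abs_nonneg _) ?_ (by linarith)
      calc |∑ l ∈ I n, (g b (X l ω) - e)| ≤ ∑ l ∈ I n, |g b (X l ω) - e| :=
            Finset.abs_sum_le_sum_abs _ _
        _ ≤ ∑ l ∈ I n, (b + |e|) := Finset.sum_le_sum fun l _ =>
            (abs_sub _ _).trans (by linarith [hgb b (X l ω)])
        _ = _ := by rw [Finset.sum_const, nsmul_eq_mul]
    have hi1 : ∀ l, Integrable fun ω => g b (X l ω) ^ 2 := fun l =>
      Integrable.of_bound (((hgm b).comp (hX l)).pow_const 2).aestronglyMeasurable ((b : ℝ) ^ 2)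
        (ae_of_all _ fun ω => by
          rw [Real.norm_eq_abs, abs_of_nonneg (sq_nonneg _), ← sq_abs]
          exact pow_le_pow_left₀ (abs_nonneg _) (hgb b _) 2)
    have hi2 : ∀ l, Integrable fun ω => |g b (X l ω)| ^ (2 * q) := fun l =>
      Integrable.of_bound (((hgm b).comp (hX l)).abs.pow_const _).aestronglyMeasurable
        ((b : ℝ) ^ (2 * q)) (ae_of_all _ fun ω => by
          rw [Real.norm_eq_abs, abs_of_nonneg (by positivity)]
          exact Real.rpow_le_rpow (abs_nonneg _) (hgb b _) (by linarith))
    refine ⟨hVi, ?_⟩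
    have hm := hC (I n) (hI n) (fun _ => g b) (fun _ _ => hgmono b) (fun l _ => hgX l)
      (fun l _ => hi1 l) (fun l _ => hi2 l) (by simpa only [hE] using hVi)
    simp only [hE] at hm
    have hs1 : (I n).sup' (hI n) (fun l => ∫ ω, |g b (X l ω)| ^ (2 * q)) ≤ (b : ℝ) ^ (2 * q) := by
      refine Finset.sup'_le _ _ fun l _ => ?_
      calc ∫ ω, |g b (X l ω)| ^ (2 * q) ≤ ∫ _ : Ω, (b : ℝ) ^ (2 * q) :=
            integral_mono (hi2 l) (integrable_const _) fun ω =>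
              Real.rpow_le_rpow (abs_nonneg _) (hgb b _) (by linarith)
        _ = _ := by simp
    have hs2 : (I n).sup' (hI n) (fun l => (∫ ω, g b (X l ω) ^ 2) ^ q) ≤ ((b : ℝ) ^ 2) ^ q := by
      refine Finset.sup'_le _ _ fun l _ => ?_
      refine Real.rpow_le_rpow (integral_nonneg fun ω => sq_nonneg _) ?_ (by linarith)
      calc ∫ ω, g b (X l ω) ^ 2 ≤ ∫ _ : Ω, (b : ℝ) ^ 2 :=
            integral_mono (hi1 l) (integrable_const _) fun ω => by
              show g b (X l ω) ^ 2 ≤ (b : ℝ) ^ 2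
              rw [← sq_abs]
              exact pow_le_pow_left₀ (abs_nonneg _) (hgb b _) 2
        _ = _ := by simp
    have hs1' : 0 ≤ (I n).sup' (hI n) (fun l => ∫ ω, |g b (X l ω)| ^ (2 * q)) := by
      obtain ⟨l, hl⟩ := hI n
      exact (integral_nonneg fun ω => by positivity).trans
        (Finset.le_sup' (fun l => ∫ ω, |g b (X l ω)| ^ (2 * q)) hl)
    have hs2' : 0 ≤ (I n).sup' (hI n) (fun l => (∫ ω, g b (X l ω) ^ 2) ^ q) := by
      obtain ⟨l, hl⟩ := hI n
      exact (Real.rpow_nonneg (integral_nonneg fun ω => sq_nonneg _) q).trans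
        (Finset.le_sup' (fun l => (∫ ω, g b (X l ω) ^ 2) ^ q) hl)
    have hNq : ((I n).card : ℝ) ≤ ((I n).card : ℝ) ^ q := by
      calc ((I n).card : ℝ) = ((I n).card : ℝ) ^ (1 : ℝ) := (Real.rpow_one _).symm
        _ ≤ _ := Real.rpow_le_rpow_of_exponent_le hN1 hq
    refine hm.trans ?_
    rw [hb', mul_add (((I n).card : ℝ) ^ q)]
    refine mul_le_mul (le_abs_self C) ?_ (by positivity) (abs_nonneg C)
    gcongr
  have hb'0 : 0 ≤ b' := by positivity
  set K : ℝ := |C| * b' / (η / 8) ^ (2 * q) with hK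
  have hK0 : 0 ≤ K := by positivity
  obtain ⟨n, hn1, hn2⟩ := ((h (η / 8) (by positivity)).and
    (hIt.eventually_gt_atTop (4 * K))).exists
  set N : ℝ := ((I n).card : ℝ) with hN
  have hN1 : (1 : ℝ) ≤ N := by rw [hN]; exact_mod_cast (hI n).card_pos
  obtain ⟨hVi, hVb⟩ := hV n
  set V : Ω → ℝ := fun ω => |∑ l ∈ I n, (g b (X l ω) - e)| with hVdef
  set R : Ω → ℝ := fun ω => ∑ l ∈ I n, |X l ω - c - g b (X l ω)| with hRdef
  have hRi : Integrable R := integrable_finsetSum _ fun l _ => hRint l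
  have hRe : ∫ ω, R ω = N * δ := by
    rw [hRdef, integral_finsetSum _ fun l _ => hRint l]; simp [hRE, hN]
  set A : Set Ω := {ω | η / 8 * N < |∑ l ∈ I n, (X l ω - c)|} with hA
  have hAm : MeasurableSet A := measurableSet_lt measurable_const
    (Finset.measurable_sum _ fun l _ => (hX l).sub_const c).abs
  have hAi : Integrable (A.indicator fun _ => (1 : ℝ)) := (integrable_const _).indicator hAm
  have hden : 0 < (η / 8 * N) ^ (2 * q) := by positivity
  -- At every `ω` one of the three error terms is large, so their bounds add up to at least `1`.
  have hpt : ∀ ω, 1 ≤ A.indicator (fun _ => (1 : ℝ)) ω + (V ω ^ (2 * q) / (η / 8 * N) ^ (2 * q)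
      + R ω / (η / 4 * N)) := by
    intro ω
    have hV0 : 0 ≤ V ω := abs_nonneg _
    have hR0 : 0 ≤ R ω := Finset.sum_nonneg fun l _ => abs_nonneg _
    have hVq : 0 ≤ V ω ^ (2 * q) / (η / 8 * N) ^ (2 * q) := by positivity
    have hRq : 0 ≤ R ω / (η / 4 * N) := by positivity
    by_cases hω : ω ∈ A
    · rw [Set.indicator_of_mem hω]; linarith
    rw [Set.indicator_of_notMem hω, zero_add]
    have hω' : |∑ l ∈ I n, (X l ω - c)| ≤ η / 8 * N := not_lt.1 hω
    rcases le_or_gt (η / 8 * N) (V ω) with h1 | h1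
    · have : 1 ≤ V ω ^ (2 * q) / (η / 8 * N) ^ (2 * q) := by
        rw [one_le_div hden]
        exact Real.rpow_le_rpow (by positivity) h1 (by linarith)
      linarith
    rcases le_or_gt (η / 4 * N) (R ω) with h2 | h2
    · have : 1 ≤ R ω / (η / 4 * N) := by
        rw [one_le_div (by positivity)]; exact h2
      linarith
    -- Otherwise `N * |e| < N * η * (1 / 8 + 1 / 4 + 1 / 8)`, contradicting `he_lb`.
    exfalso
    have h3 : N * e = ∑ l ∈ I n, (X l ω - c) - ∑ l ∈ I n, (X l ω - c - g b (X l ω))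
        - ∑ l ∈ I n, (g b (X l ω) - e) := by
      simp only [Finset.sum_sub_distrib, Finset.sum_const, nsmul_eq_mul, hN]; ring
    have h4 : |∑ l ∈ I n, (X l ω - c - g b (X l ω))| ≤ R ω := Finset.abs_sum_le_sum_abs _ _
    have h5 : N * |e| ≤ η / 8 * N + R ω + V ω := by
      rw [← abs_of_pos (by linarith : 0 < N), ← abs_mul, h3, abs_of_pos (by linarith : 0 < N)]
      refine (abs_sub _ _).trans (add_le_add ((abs_sub _ _).trans (add_le_add hω' h4)) le_rfl)
    have h6 : N * (η - η / 16) ≤ N * |e| := by gcongr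
    have h7 : 0 < N * η := by positivity
    nlinarith
  have hint : (1 : ℝ) ≤ (volume A).toReal +
      ((∫ ω, V ω ^ (2 * q)) / (η / 8 * N) ^ (2 * q) + N * δ / (η / 4 * N)) := by
    have h1 : ∫ ω, A.indicator (fun _ => (1 : ℝ)) ω = (volume A).toReal := by
      rw [integral_indicator_const _ hAm]; simp [Measure.real]
    have hVi' : Integrable fun ω => V ω ^ (2 * q) / (η / 8 * N) ^ (2 * q) := hVi.div_const _
    have hRi' : Integrable fun ω => R ω / (η / 4 * N) := hRi.div_const _
    have hVR : Integrable fun ω =>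
      V ω ^ (2 * q) / (η / 8 * N) ^ (2 * q) + R ω / (η / 4 * N) := hVi'.add hRi'
    calc (1 : ℝ) = ∫ _ : Ω, (1 : ℝ) := by simp
      _ ≤ ∫ ω, (A.indicator (fun _ => (1 : ℝ)) ω + (V ω ^ (2 * q) / (η / 8 * N) ^ (2 * q)
            + R ω / (η / 4 * N))) := integral_mono (integrable_const _) (hAi.add hVR) hpt
      _ = _ := by
          rw [integral_add hAi hVR, h1, integral_add hVi' hRi', integral_div, integral_div, hRe]
  have hlast : N * δ / (η / 4 * N) ≤ 1 / 4 := by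
    rw [div_le_iff₀ (by positivity)]; nlinarith
  have hmid : (∫ ω, V ω ^ (2 * q)) / (η / 8 * N) ^ (2 * q) ≤ 1 / 4 := by
    have hNN : N ^ (2 * q) = N ^ q * N ^ q := by
      rw [← Real.rpow_add (by linarith)]; ring_nf
    have hNq : N ≤ N ^ q := by
      calc N = N ^ (1 : ℝ) := (Real.rpow_one _).symm
        _ ≤ _ := Real.rpow_le_rpow_of_exponent_le hN1 hq
    calc (∫ ω, V ω ^ (2 * q)) / (η / 8 * N) ^ (2 * q)
        ≤ |C| * (N ^ q * b') / (η / 8 * N) ^ (2 * q) := by gcongr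
      _ = K / N ^ q := by
          rw [Real.mul_rpow (by positivity) (by positivity), hNN, hK]
          field_simp
      _ ≤ K / N := by gcongr
      _ ≤ 1 / 4 := by
          rw [div_le_iff₀ (by linarith)]; linarith
  linarith

/-! ### The converse theorem -/

/-- Hsu–Robbins–Erdős–Spitzer–Baum–Katz theorem for dependent random fields
(necessity part). -/
theorem baum_katz_dependent_fields_converse
    {Ω : Type*} [MeasureSpace Ω] [IsProbabilityMeasure (volume : Measure Ω)]
    (p α q : ℝ) (hp : 1 ≤ p) (hα1 : 1 / 2 < α) (hα2 : α ≤ 1) (hαp : 1 ≤ α * p)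
    (hq1 : 1 ≤ q) (hq2 : p < 2 → q = 1) (hq3 : 2 ≤ p → (α * p - 1) / (2 * α - 1) < q)
    (X : ℕ → ℕ → Ω → ℝ)
    (hmeas : ∀ m n : ℕ, 1 ≤ m → 1 ≤ n → Measurable (X m n))
    (hH : CondH q fun k : PIdx => X k.1.1 k.1.2)
    (Y : Ω → ℝ) (hYmeas : Measurable Y)
    (hid : ∀ m n : ℕ, 1 ≤ m → 1 ≤ n → IdentDistrib (X m n) Y)
    (μ : ℝ)
    (hsum : ∀ ε : ℝ, 0 < ε →
      Summable fun k : ℕ × ℕ =>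
        (((k.1 + 1) * (k.2 + 1) : ℕ) : ℝ) ^ (α * p - 2) *
          (volume {ω | ε * (((k.1 + 1) * (k.2 + 1) : ℕ) : ℝ) ^ α <
            maxDS (fun i j => X i j ω - μ) (k.1 + 1) (k.2 + 1)}).toReal) :
    (∫ ω, Y ω) = μ ∧ Integrable fun ω => |Y ω| ^ p * rlog |Y ω| := by
  let X' : PIdx → Ω → ℝ := fun k => X k.1.1 k.1.2
  have hX' : ∀ l, Measurable (X' l) := fun l => hmeas _ _ l.2.1 l.2.2
  have hid' : ∀ l, IdentDistrib (X' l) Y := fun l => hid _ _ l.2.1 l.2.2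
  let M : Ω → ℕ → ℕ → ℝ := fun ω m n => maxDS (fun i j => X i j ω - μ) m n
  let Q : ℝ → ℕ × ℕ → ℝ := fun ε k =>
    (volume {ω | ε * ((2 : ℝ) ^ (k.1 + k.2)) ^ α < M ω (2 ^ k.1) (2 ^ k.2)}).toReal
  have hQ0 : ∀ ε k, 0 ≤ Q ε k := fun _ _ => ENNReal.toReal_nonneg
  have hα0 : 0 < α := by linarith
  have hdy : ∀ ε : ℝ, 0 < ε →
      Summable fun k : ℕ × ℕ => ((2 : ℝ) ^ (k.1 + k.2)) ^ (α * p - 1) * Q ε k := by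
    intro ε hε
    have h := dyadic_summable (α * p - 2) (by linarith)
      (fun m n => (volume {ω | ε / 4 * ((m * n : ℕ) : ℝ) ^ α < M ω m n}).toReal)
      (fun _ _ => ENNReal.toReal_nonneg)
      (fun a b => Q ε (a, b)) (fun _ _ => hQ0 _ _) ?_ (hsum (ε / 4) (by positivity))
    · rw [show α * p - 2 + 1 = α * p - 1 by ring] at h
      exact h
    intro a b m n hm1 hm2 hn1 hn2
    refine measureReal_mono (μ := volume) fun ω hω => ?_
    have hω' : ε * ((2 : ℝ) ^ (a + b)) ^ α < M ω (2 ^ a) (2 ^ b) := hω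
    show ε / 4 * ((m * n : ℕ) : ℝ) ^ α < M ω m n
    have h1 : ((m * n : ℕ) : ℝ) ≤ 4 * 2 ^ (a + b) := by
      have h2 : m * n ≤ 2 ^ (a + 1) * 2 ^ (b + 1) := Nat.mul_le_mul hm2.le hn2.le
      have h3 : ((m * n : ℕ) : ℝ) ≤ 2 ^ (a + 1) * 2 ^ (b + 1) := by exact_mod_cast h2
      refine h3.trans (le_of_eq ?_); ring
    have h4 : (4 : ℝ) ^ α ≤ 4 := by
      calc (4 : ℝ) ^ α ≤ 4 ^ (1 : ℝ) := Real.rpow_le_rpow_of_exponent_le (by norm_num) hα2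
        _ = 4 := Real.rpow_one 4
    calc ε / 4 * ((m * n : ℕ) : ℝ) ^ α ≤ ε / 4 * (4 * 2 ^ (a + b)) ^ α := by gcongr
      _ = ε / 4 * (4 ^ α * ((2 : ℝ) ^ (a + b)) ^ α) := by
          rw [Real.mul_rpow (by norm_num) (by positivity)]
      _ ≤ ε / 4 * (4 * ((2 : ℝ) ^ (a + b)) ^ α) := by gcongr
      _ = ε * ((2 : ℝ) ^ (a + b)) ^ α := by ring
      _ < M ω (2 ^ a) (2 ^ b) := hω'
      _ ≤ M ω m n := maxDS_mono _ hm1 hn1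
  have hsmall : ∀ ε δ : ℝ, 0 < ε → 0 < δ → ∀ᶠ k in cofinite, Q ε k ≤ δ := by
    intro ε δ hε hδ
    filter_upwards [(hdy ε hε).tendsto_cofinite_zero.eventually (gt_mem_nhds hδ)] with k hk
    have h1 : (1 : ℝ) ≤ ((2 : ℝ) ^ (k.1 + k.2)) ^ (α * p - 1) :=
      Real.one_le_rpow (one_le_pow₀ (by norm_num)) (by linarith)
    exact (le_mul_of_one_le_left (hQ0 ε k) h1).trans hk.le
  -- `|X' l - μ| ≤ 4 * M` on the rectangle, so the tail of `Y` at the dyadic levels is summable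
  -- with weight `2 ^ ((a + b) * α * p)`.
  obtain ⟨T, hT, htail⟩ := tail_count_abs hq1 hX' hH hid' μ
  have hmom : Integrable fun ω => |Y ω| ^ p * rlog |Y ω| := by
    refine integrable_of_tail p α (4 + |μ|) (by linarith) hα0
      (by have := abs_nonneg μ; linarith) hYmeas ?_
    refine Summable.of_norm_bounded_eventually ((hdy 1 one_pos).mul_left T) ?_
    filter_upwards [hsmall 1 (1 / 2) one_pos (by norm_num)] with k hk
    set N : ℝ := (2 : ℝ) ^ (k.1 + k.2) with hN
    have hN1 : 1 ≤ N := one_le_pow₀ (by norm_num)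
    have hNα : 1 ≤ N ^ α := Real.one_le_rpow hN1 hα0.le
    have hsub : (volume {ω | ∃ l ∈ rect (2 ^ k.1) (2 ^ k.2), 4 * N ^ α < |X' l ω - μ|}).toReal
        ≤ Q 1 k := by
      refine measureReal_mono (μ := volume) ?_
      rintro ω ⟨l, hl, hlt⟩
      obtain ⟨hl1, hl2⟩ := mem_rect.1 hl
      have := abs_entry_le (fun i j => X i j ω - μ) l.2.1 hl1 l.2.2 hl2
      show 1 * N ^ α < M ω (2 ^ k.1) (2 ^ k.2)
      have h5 : 4 * N ^ α < 4 * M ω (2 ^ k.1) (2 ^ k.2) := lt_of_lt_of_le hlt this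
      linarith
    have h1 := htail (4 * N ^ α) (rect (2 ^ k.1) (2 ^ k.2))
      (rect_nonempty Nat.one_le_two_pow Nat.one_le_two_pow) (hsub.trans hk)
    have hcard : ((rect (2 ^ k.1) (2 ^ k.2)).card : ℝ) = N := by
      rw [card_rect, hN, pow_add]; push_cast; rfl
    rw [hcard] at h1
    have h2 : (volume {ω | (4 + |μ|) * N ^ α < |Y ω|}).toReal ≤
        (volume {ω | 4 * N ^ α < |Y ω - μ|}).toReal := by
      refine measureReal_mono (μ := volume) fun ω hω => ?_
      have hω' : (4 + |μ|) * N ^ α < |Y ω| := hω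
      show 4 * N ^ α < |Y ω - μ|
      have h3 := abs_sub_abs_le_abs_sub (Y ω) μ
      have h4 : |μ| ≤ |μ| * N ^ α := le_mul_of_one_le_right (abs_nonneg μ) hNα
      linarith
    rw [Real.norm_eq_abs, abs_of_nonneg (mul_nonneg (by positivity) ENNReal.toReal_nonneg)]
    have hNp : N ^ (α * p) = N ^ (α * p - 1) * N := by
      rw [← Real.rpow_add_one (by linarith)]; ring_nf
    calc N ^ (α * p) * (volume {ω | (4 + |μ|) * N ^ α < |Y ω|}).toReal
        ≤ N ^ (α * p) * (volume {ω | 4 * N ^ α < |Y ω - μ|}).toReal := by gcongr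
      _ = N ^ (α * p - 1) * (N * (volume {ω | 4 * N ^ α < |Y ω - μ|}).toReal) := by
          rw [hNp]; ring
      _ ≤ N ^ (α * p - 1) * (T * Q 1 k) := by
          refine mul_le_mul_of_nonneg_left ?_ (by positivity)
          exact h1.trans (mul_le_mul_of_nonneg_left hsub hT.le)
      _ = T * (N ^ (α * p - 1) * Q 1 k) := by ring
  refine ⟨?_, hmom⟩
  have hYint : Integrable Y := by
    refine Integrable.mono' ((integrable_const 1).add (hmom.const_mul 2))
      hYmeas.aestronglyMeasurable (ae_of_all _ fun ω => ?_)
    rw [Real.norm_eq_abs]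
    show |Y ω| ≤ 1 + 2 * (|Y ω| ^ p * rlog |Y ω|)
    have h1 := half_le_rlog |Y ω|
    have h2 : 0 ≤ |Y ω| ^ p := by positivity
    rcases le_total |Y ω| 1 with h | h
    · have : 0 ≤ |Y ω| ^ p * rlog |Y ω| := mul_nonneg h2 (rlog_nonneg _)
      linarith
    · have h3 : |Y ω| ≤ |Y ω| ^ p := by
        calc |Y ω| = |Y ω| ^ (1 : ℝ) := (Real.rpow_one _).symm
          _ ≤ _ := Real.rpow_le_rpow_of_exponent_le h hp
      nlinarith
  -- Since `α ≤ 1`, `hsmall` gives a weak law along the rectangles `2 ^ n × 1`.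
  have hcard : ∀ n : ℕ, ((rect (2 ^ n) (2 ^ 0)).card : ℝ) = (2 : ℝ) ^ n := fun n => by
    rw [card_rect]; push_cast; ring
  refine mean_eq hq1 hX' hH hYmeas hid' hYint μ (fun n => rect (2 ^ n) (2 ^ 0))
    (fun n => rect_nonempty Nat.one_le_two_pow le_rfl) ?_ fun η hη => ?_
  · simp only [hcard]
    exact tendsto_pow_atTop_atTop_of_one_lt (by norm_num)
  have hinj : Function.Injective fun n : ℕ => (n, 0) := fun a b h => (Prod.ext_iff.1 h).1
  have hev := hinj.tendsto_cofinite.eventually (hsmall η (1 / 4) hη (by norm_num))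
  rw [Nat.cofinite_eq_atTop] at hev
  filter_upwards [hev] with n hn
  refine le_trans (measureReal_mono (μ := volume) ?_) hn
  intro ω hω
  rw [Set.mem_ofPred_eq, hcard] at hω
  show η * ((2 : ℝ) ^ (n + 0)) ^ α < M ω (2 ^ n) (2 ^ 0)
  have h1 : ((2 : ℝ) ^ (n + 0)) ^ α ≤ 2 ^ n := by
    calc ((2 : ℝ) ^ (n + 0)) ^ α ≤ ((2 : ℝ) ^ (n + 0)) ^ (1 : ℝ) :=
          Real.rpow_le_rpow_of_exponent_le (one_le_pow₀ (by norm_num)) hα2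
      _ = 2 ^ n := Real.rpow_one _
  have h2 : |∑ l ∈ rect (2 ^ n) (2 ^ 0), (X' l ω - μ)| ≤ M ω (2 ^ n) (2 ^ 0) := by
    rw [sum_rect (2 ^ n) (2 ^ 0) fun i j => X i j ω - μ]
    exact le_maxDS _ le_rfl le_rfl
  calc η * ((2 : ℝ) ^ (n + 0)) ^ α ≤ η * 2 ^ n := by gcongr
    _ < _ := hω
    _ ≤ _ := h2
end
end
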